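/- arXiv:0905.0913 — 3 statements merged into one kernel-verified Lean document; each statement's English description precedes it below -/
import Mathlib

section
/- Let A be a tree and G ≤ Aut(A). Assume G has Tits' independence property (P), leaves no nonempty proper subtree of A invariant, and does not stabilize any end of A. Then G⁺ is boundedly simple if and only if there is a natural number K such that (1) every translation belonging to G⁺ is a product of at most K rotations belonging to G⁺, and (2) every rotation belonging to G⁺ is a product of at most K elements each belonging to the pointwise stabilizer in G of some edge of A. -/
/-!
If `G⁺` is boundedly simple, fix one nontrivial element `σ` of an edge stabilizer. Conjugates of
`σ` and `σ⁻¹` again stabilize an edge, so every element of `G⁺` is a bounded product of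
edge-stabilizing elements, each of which is a rotation, and both conditions follow.

Conversely, elements of `G⁺` move vertices by even distances (`plus_even`), so none inverts an
edge and each is a rotation or a translation. The two conditions thus make every element of `G⁺`
a product of at most `K * K + K` edge-stabilizing elements. It remains to see that, for every
nontrivial `g ∈ G⁺`, every edge-stabilizing element is a product of at most eight conjugates of
`g` and `g⁻¹` (`edgeStab_bounded`).

The geometry is expressed through half-trees, the two components left by removing an edge. As no
subtree is invariant and no end is fixed, `G` moves every half-tree into every other one
(`exists_map_into`). A nontrivial `g` moves some half-tree off itself (`exists_displaced`);
together these show that `G⁺` also moves every half-tree into every other one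
(`exists_plus_map_into`), and that `t = g * (s * g * s⁻¹)` is hyperbolic for some `s ∈ G⁺`
(`exists_pushes`).

The axis of `t` misses some half-tree. For `f` supported in that half-tree, property (P)
applied to the axis provides the infinite product `k` of the conjugates `t ^ i * f * t ^ (-i)`,
`i ≥ 0`, and then `f = (k * t * k⁻¹) * t⁻¹` (`commutator_trick`), a product of four conjugates of
`g` and `g⁻¹`. Conjugating in `G⁺`, the same holds for elements supported in any half-tree, and by
property (P) for an edge every edge-stabilizing element is a product of two such elements
(`edge_split`).
-/

open Pointwise

namespace BSTrees

universe u

variable {V : Type u} {I : Type*}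

/-- `π` is an automorphism of the graph `G`. -/
def IsAut (G : SimpleGraph V) (π : Equiv.Perm V) : Prop :=
  ∀ x y : V, G.Adj (π x) (π y) ↔ G.Adj x y

/-- The automorphism group of `G`, as a subgroup of `Equiv.Perm V`. -/
def autGroup (G : SimpleGraph V) : Subgroup (Equiv.Perm V) where
  carrier := {π | IsAut G π}
  one_mem' := fun _ _ => Iff.rfl
  mul_mem' := fun {a b} ha hb x y => (ha (b x) (b y)).trans (hb x y)
  inv_mem' := fun {a} ha x y => by
    have h := (ha (a⁻¹ x) (a⁻¹ y)).symm
    simpa using h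

/-- `z` lies on the geodesic between `x` and `y`. -/
def OnGeodesic (G : SimpleGraph V) (x y z : V) : Prop :=
  G.dist x z + G.dist z y = G.dist x y

/-- A set of vertices closed under geodesics (inducing a subtree). -/
def GeodClosed (G : SimpleGraph V) (S : Set V) : Prop :=
  ∀ x ∈ S, ∀ y ∈ S, ∀ z, OnGeodesic G x y z → z ∈ S

/-- A rotation: an automorphism fixing some vertex. -/
def IsRotation (π : Equiv.Perm V) : Prop := ∃ v, π v = v

/-- An inversion (symmetry): an automorphism swapping the endpoints of some edge. -/
def IsInversion (G : SimpleGraph V) (π : Equiv.Perm V) : Prop :=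
  ∃ x y, G.Adj x y ∧ π x = y ∧ π y = x

/-- A translation: neither a rotation nor an inversion. -/
def IsTranslation (G : SimpleGraph V) (π : Equiv.Perm V) : Prop :=
  ¬ IsRotation π ∧ ¬ IsInversion G π

/-- `ℓ` is the translation length of `π`: the minimum of `dist s (π s)`. -/
def TranslationLengthIs (G : SimpleGraph V) (π : Equiv.Perm V) (ℓ : ℕ) : Prop :=
  IsLeast {d | ∃ s, G.dist s (π s) = d} ℓ

/-- Elements of `H` pointwise stabilizing some edge of `G`. -/
def edgeStabilizers (G : SimpleGraph V) (H : Subgroup (Equiv.Perm V)) :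
    Set (Equiv.Perm V) :=
  {π | π ∈ H ∧ ∃ x y, G.Adj x y ∧ π x = x ∧ π y = y}

/-- `H⁺`: the subgroup generated by pointwise stabilizers in `H` of edges. -/
def plusGroup (G : SimpleGraph V) (H : Subgroup (Equiv.Perm V)) :
    Subgroup (Equiv.Perm V) :=
  Subgroup.closure (edgeStabilizers G H)

/-- The group of color-preserving automorphisms of the colored tree `(G, f)`. -/
def autf (G : SimpleGraph V) (f : V → I) : Subgroup (Equiv.Perm V) where
  carrier := {π | IsAut G π ∧ ∀ v, f (π v) = f v}
  one_mem' := ⟨fun _ _ => Iff.rfl, fun _ => rfl⟩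
  mul_mem' := fun {a b} ha hb =>
    ⟨fun x y => (ha.1 (b x) (b y)).trans (hb.1 x y),
     fun v => (ha.2 (b v)).trans (hb.2 v)⟩
  inv_mem' := fun {a} ha => by
    refine ⟨fun x y => ?_, fun v => ?_⟩
    · have h := (ha.1 (a⁻¹ x) (a⁻¹ y)).symm
      simpa using h
    · have h := (ha.2 (a⁻¹ v)).symm
      simpa using h

/-- `Aut_f⁺(A)`. -/
def autfPlus (G : SimpleGraph V) (f : V → I) : Subgroup (Equiv.Perm V) :=
  plusGroup G (autf G f)

/-- `Aut⁺(A)`. -/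
def autPlus (G : SimpleGraph V) : Subgroup (Equiv.Perm V) :=
  plusGroup G (autGroup G)

/-- A ray in `G`. -/
def IsRay (G : SimpleGraph V) (r : ℕ → V) : Prop :=
  Function.Injective r ∧ ∀ n, G.Adj (r n) (r (n + 1))

/-- Two rays determine the same end iff their images have infinite intersection. -/
def SameEnd (r r' : ℕ → V) : Prop := (Set.range r ∩ Set.range r').Infinite

/-- `H` stabilizes the end of the ray `r`. -/
def StabilizesEnd (G : SimpleGraph V) (H : Subgroup (Equiv.Perm V)) (r : ℕ → V) :
    Prop :=
  ∀ π ∈ H, ∀ r' : ℕ → V, IsRay G r' → SameEnd r' r → SameEnd (π ∘ r') r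

/-- `H` does not stabilize any end of `G`. -/
def NoStabilizedEnd (G : SimpleGraph V) (H : Subgroup (Equiv.Perm V)) : Prop :=
  ¬ ∃ r : ℕ → V, IsRay G r ∧ StabilizesEnd G H r

/-- `H` leaves no nonempty proper subtree of `G` invariant. -/
def NoInvariantSubtree (G : SimpleGraph V) (H : Subgroup (Equiv.Perm V)) : Prop :=
  ¬ ∃ S : Set V, S.Nonempty ∧ S ≠ Set.univ ∧ GeodClosed G S ∧
    ∀ π ∈ H, π '' S = S

/-- A path in the tree: a nonempty geodesically closed set in which every vertex
has at most two neighbors inside the set. -/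
def IsPathSet (G : SimpleGraph V) (C : Set V) : Prop :=
  C.Nonempty ∧ GeodClosed G C ∧
    ∀ v ∈ C, ∀ a ∈ C, ∀ b ∈ C, ∀ c ∈ C,
      G.Adj v a → G.Adj v b → G.Adj v c → a = b ∨ a = c ∨ b = c

/-- `p` is a nearest-point projection onto `C`. -/
def IsProj (G : SimpleGraph V) (C : Set V) (p : V → V) : Prop :=
  ∀ x, p x ∈ C ∧ ∀ c ∈ C, G.dist x (p x) ≤ G.dist x c

/-- Tits' independence property `(P)` for `H ≤ Aut(G)`: for every path `C` with
nearest-point projection `p`, and every family of elements of the pointwise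
stabilizer of `C`, there is a unique element of that stabilizer agreeing with
the `s`-th member of the family on the fiber `p⁻¹(s)`, for every `s ∈ C`. -/
def PropertyP (G : SimpleGraph V) (H : Subgroup (Equiv.Perm V)) : Prop :=
  ∀ C : Set V, IsPathSet G C → ∀ p : V → V, IsProj G C p →
    ∀ gs : V → Equiv.Perm V,
      (∀ s ∈ C, gs s ∈ H ∧ ∀ c ∈ C, gs s c = c) →
      ∃! g : Equiv.Perm V, g ∈ H ∧ (∀ c ∈ C, g c = c) ∧
        ∀ s ∈ C, ∀ x, p x = s → g x = gs s x

/-- A group is `N`-boundedly simple if every nontrivial element is a product of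
at most `N` conjugates of `g` or of `g⁻¹`, for every nontrivial `g`. -/
def IsNBoundedlySimple (Γ : Type*) [Group Γ] (N : ℕ) : Prop :=
  ∀ g h : Γ, g ≠ 1 → h ≠ 1 →
    ∃ l : List Γ, l.length ≤ N ∧
      (∀ x ∈ l, ∃ c : Γ, x = c * g * c⁻¹ ∨ x = c * g⁻¹ * c⁻¹) ∧ l.prod = h

/-- A group is boundedly simple if it is `N`-boundedly simple for some `N`. -/
def IsBoundedlySimple (Γ : Type*) [Group Γ] : Prop :=
  ∃ N : ℕ, IsNBoundedlySimple Γ N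

/-- The conjugacy class of `g` under conjugation by elements of `H`. -/
def conjClassIn {Γ : Type*} [Group Γ] (H : Subgroup Γ) (g : Γ) : Set Γ :=
  {k | ∃ c ∈ H, k = c * g * c⁻¹}

/-- A ramification point: a vertex with at least three neighbors. -/
def IsRamification (G : SimpleGraph V) (r : V) : Prop :=
  ∃ a b c, a ≠ b ∧ a ≠ c ∧ b ≠ c ∧ G.Adj r a ∧ G.Adj r b ∧ G.Adj r c

/-- An `(n,m)`-biregular tree: a proper 2-coloring where every vertex of the
first color has exactly `n` neighbors and every vertex of the second has `m`. -/
def IsBiregular (G : SimpleGraph V) (n m : Cardinal.{u}) : Prop :=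
  ∃ c : V → Bool, (∀ x y, G.Adj x y → c x ≠ c y) ∧
    (∀ v, c v = false → Cardinal.mk (G.neighborSet v) = n) ∧
    (∀ v, c v = true → Cardinal.mk (G.neighborSet v) = m)

/-- An almost `(n,m)`-regular tree: a subdivision of the `(n,m)`-biregular tree,
described by a coloring `g : V → {0,…,k}`. -/
def IsAlmostBiregular (G : SimpleGraph V) (n m : Cardinal.{u}) : Prop :=
  ∃ k : ℕ, 1 ≤ k ∧ ∃ g : V → ℕ, (∀ v, g v ≤ k) ∧
    (∀ v, g v = 0 → (∀ w, G.Adj v w → g w = 1) ∧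
      Cardinal.mk (G.neighborSet v) = n) ∧
    (∀ v, g v = k → (∀ w, G.Adj v w → g w = k - 1) ∧
      Cardinal.mk (G.neighborSet v) = m) ∧
    (∀ v, 0 < g v → g v < k → ∃ a b, a ≠ b ∧ G.Adj v a ∧ G.Adj v b ∧
      g a = g v - 1 ∧ g b = g v + 1 ∧ ∀ w, G.Adj v w → w = a ∨ w = b)

/-- The axis of a translation: vertices of minimal displacement. -/
def axisSet (G : SimpleGraph V) (π : Equiv.Perm V) : Set V :=
  {v | ∀ w, G.dist v (π v) ≤ G.dist w (π w)}

/-! ### Half-trees and geodesics -/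

/-- The half-tree on the `q`-side of the edge `{p, q}`. -/
def halfTree (G : SimpleGraph V) (p q : V) : Set V := {z | G.dist z q < G.dist z p}

section Tree

variable {G : SimpleGraph V}

lemma mem_halfTree {p q z : V} : z ∈ halfTree G p q ↔ G.dist z q < G.dist z p := Iff.rfl

lemma dist_pos' (hG : G.IsTree) {x y : V} (h : x ≠ y) : 0 < G.dist x y :=
  hG.connected.pos_dist_of_ne h

lemma eq_of_dist_zero (hG : G.IsTree) {x y : V} (h : G.dist x y = 0) : x = y :=
  hG.connected.dist_eq_zero_iff.1 h

lemma tri (hG : G.IsTree) (x y z : V) : G.dist x z ≤ G.dist x y + G.dist y z :=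
  hG.connected.dist_triangle

lemma adj_step (hG : G.IsTree) {p q : V} (h : G.Adj p q) (z : V) :
    G.dist z p = G.dist z q + 1 ∨ G.dist z q = G.dist z p + 1 :=
  hG.dist_eq_dist_add_one_of_adj z h

lemma mem_or (hG : G.IsTree) {p q : V} (h : G.Adj p q) (z : V) :
    (z ∈ halfTree G p q ∧ z ∉ halfTree G q p ∧ G.dist z p = G.dist z q + 1) ∨
      (z ∉ halfTree G p q ∧ z ∈ halfTree G q p ∧ G.dist z q = G.dist z p + 1) := by
  simp only [mem_halfTree]
  rcases adj_step hG h z with h | h <;> omega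

lemma mem_swap_iff (hG : G.IsTree) {p q : V} (h : G.Adj p q) {z : V} :
    z ∈ halfTree G q p ↔ z ∉ halfTree G p q := by
  rcases mem_or hG h z with h | h <;> tauto

lemma left_not_mem {p q : V} : p ∉ halfTree G p q := by
  simp [mem_halfTree]

lemma right_mem {p q : V} (h : G.Adj p q) : q ∈ halfTree G p q := by
  have := SimpleGraph.dist_eq_one_iff_adj.2 h.symm
  simp [mem_halfTree, this]

lemma exists_step (hG : G.IsTree) {x z : V} (h : x ≠ z) :
    ∃ a, G.Adj x a ∧ G.dist z x = G.dist z a + 1 ∧ z ∈ halfTree G x a := by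
  obtain ⟨w, hw⟩ := hG.connected.exists_walk_length_eq_dist x z
  cases w with
  | nil => exact absurd rfl h
  | @cons _ a _ hadj w =>
    refine ⟨a, hadj, ?_⟩
    have h1 := SimpleGraph.dist_le w
    rw [SimpleGraph.Walk.length_cons] at hw
    have h2 : G.dist z a = G.dist a z := SimpleGraph.dist_comm
    have h3 : G.dist z x = G.dist x z := SimpleGraph.dist_comm
    have h4 := adj_step hG hadj z
    rw [mem_halfTree]
    omega

lemma step_unique (hG : G.IsTree) {x a b z : V} (ha : G.Adj x a) (hb : G.Adj x b)
    (hza : z ∈ halfTree G x a) (hzb : z ∈ halfTree G x b) : a = b := by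
  rw [mem_halfTree] at hza hzb
  have key : ∀ c, G.Adj x c → G.dist z c < G.dist z x →
      ∃ w : G.Walk x z, w.IsPath ∧ w.snd = c := by
    intro c hc hlt
    obtain ⟨w, hw⟩ := hG.connected.exists_walk_length_eq_dist c z
    refine ⟨SimpleGraph.Walk.cons hc w, ?_, by simp⟩
    apply SimpleGraph.Walk.isPath_of_length_eq_dist
    have h2 : G.dist z c = G.dist c z := SimpleGraph.dist_comm
    have h3 : G.dist z x = G.dist x z := SimpleGraph.dist_comm
    have h4 := adj_step hG hc z
    rw [SimpleGraph.Walk.length_cons]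
    omega
  obtain ⟨w, hw, rfl⟩ := key a ha hza
  obtain ⟨w', hw', rfl⟩ := key b hb hzb
  rw [(hG.existsUnique_path x z).unique hw hw']

/-- The only edge leaving a half-tree is its defining edge. -/
lemma crossing (hG : G.IsTree) {p q x y : V} (h : G.Adj p q) (hxy : G.Adj x y)
    (hx : x ∈ halfTree G p q) (hy : y ∉ halfTree G p q) : x = q ∧ y = p := by
  have h1 := adj_step hG h x
  have h2 := adj_step hG h y
  have h3 := adj_step hG hxy p
  have h4 := adj_step hG hxy q
  have c1 : G.dist p x = G.dist x p := SimpleGraph.dist_comm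
  have c2 : G.dist q x = G.dist x q := SimpleGraph.dist_comm
  have c3 : G.dist p y = G.dist y p := SimpleGraph.dist_comm
  have c4 : G.dist q y = G.dist y q := SimpleGraph.dist_comm
  have hx' := mem_halfTree.1 hx
  rw [mem_halfTree] at hy
  by_cases hpy : p = y
  · subst hpy
    refine ⟨eq_of_dist_zero hG ?_, rfl⟩
    have := G.dist_self (v := p)
    omega
  · exfalso
    obtain ⟨n, hn, hn1, -⟩ := exists_step hG hpy
    have hnx : x ∈ halfTree G p n := by
      rw [mem_halfTree]
      have t := tri hG x y n
      have : G.dist x y = 1 := SimpleGraph.dist_eq_one_iff_adj.2 hxy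
      omega
    obtain rfl := step_unique hG hn h hnx hx
    omega

/-- A geodesic leaving a half-tree runs through the defining edge. -/
lemma dist_cross (hG : G.IsTree) {p q : V} (h : G.Adj p q) {u v : V}
    (hu : u ∈ halfTree G p q) (hv : v ∉ halfTree G p q) :
    G.dist u v = G.dist u q + 1 + G.dist p v := by
  induction hn : G.dist u v generalizing u with
  | zero => exact absurd (eq_of_dist_zero hG hn ▸ hu) hv
  | succ n ih =>
    have huv : u ≠ v := by rintro rfl; exact hv hu
    obtain ⟨a, hua, ha, -⟩ := exists_step hG huv
    have c1 : G.dist v u = G.dist u v := SimpleGraph.dist_comm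
    have c2 : G.dist v a = G.dist a v := SimpleGraph.dist_comm
    by_cases haT : a ∈ halfTree G p q
    · have e := ih haT (by omega)
      have c3 : G.dist q u = G.dist u q := SimpleGraph.dist_comm
      have c4 : G.dist q a = G.dist a q := SimpleGraph.dist_comm
      have s := adj_step hG hua q
      have t1 := tri hG u q v
      have t2 := tri hG q p v
      have : G.dist q p = 1 := SimpleGraph.dist_eq_one_iff_adj.2 h.symm
      omega
    · obtain ⟨rfl, rfl⟩ := crossing hG h hua hu haT
      rw [SimpleGraph.dist_self]
      omega

lemma dist_cross' (hG : G.IsTree) {p q : V} (h : G.Adj p q) {u v : V}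
    (hu : u ∈ halfTree G p q) (hv : v ∉ halfTree G p q) :
    G.dist u v = G.dist u p + G.dist p v := by
  rw [dist_cross hG h hu hv]
  have := adj_step hG h u
  rw [mem_halfTree] at hu
  omega

lemma halfTree_convex (hG : G.IsTree) {p q : V} (h : G.Adj p q) :
    GeodClosed G (halfTree G p q) := by
  intro x hx y hy z hz
  by_contra hzT
  have h1 := dist_cross hG h hx hzT
  have h2 := dist_cross hG h hy hzT
  have t := tri hG x q y
  have c : G.dist z y = G.dist y z := SimpleGraph.dist_comm
  have c' : G.dist q y = G.dist y q := SimpleGraph.dist_comm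
  unfold OnGeodesic at hz
  omega

lemma OnGeodesic.symm {x y z : V} (h : OnGeodesic G x y z) : OnGeodesic G y x z := by
  unfold OnGeodesic at *
  rw [G.dist_comm (u := y) (v := z), G.dist_comm (u := z) (v := x),
    G.dist_comm (u := y) (v := x)]
  omega

lemma onGeodesic_left (x y : V) : OnGeodesic G x y x := by simp [OnGeodesic]

lemma onGeodesic_right (x y : V) : OnGeodesic G x y y := by simp [OnGeodesic]

lemma onGeodesic_cross (hG : G.IsTree) {p q : V} (h : G.Adj p q) {u v : V}
    (hu : u ∈ halfTree G p q) (hv : v ∉ halfTree G p q) : OnGeodesic G u v p :=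
  (dist_cross' hG h hu hv).symm

/-- A vertex off the geodesic `[x, y]` is separated from it by a half-tree. -/
lemma separate (hG : G.IsTree) {x y z : V} (h : ¬ OnGeodesic G x y z) :
    ∃ q, G.Adj z q ∧ x ∈ halfTree G z q ∧ y ∈ halfTree G z q := by
  have hzx : z ≠ x := by rintro rfl; exact h (onGeodesic_left _ _)
  obtain ⟨q, hq, -, hx⟩ := exists_step hG hzx
  refine ⟨q, hq, hx, ?_⟩
  by_contra hy
  exact h (onGeodesic_cross hG hq hx hy)

lemma interval_convex (hG : G.IsTree) (x y : V) : GeodClosed G {z | OnGeodesic G x y z} := by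
  intro u hu v hv w hw
  by_contra hwn
  obtain ⟨q, hq, hx, hy⟩ := separate hG hwn
  have c := halfTree_convex hG hq
  exact left_not_mem (c u (c x hx y hy u hu) v (c x hx y hy v hv) w hw)

lemma thin (hG : G.IsTree) {x y w : V} (z : V) (hw : OnGeodesic G x y w) :
    OnGeodesic G x z w ∨ OnGeodesic G z y w := by
  by_contra! hcon
  obtain ⟨q, hq, hx, hz⟩ := separate hG hcon.1
  have c := halfTree_convex hG hq
  refine hcon.2 (onGeodesic_cross hG hq hz fun hy => ?_)
  exact left_not_mem (c x hx y hy w hw)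

lemma onGeodesic_of_le (hG : G.IsTree) {x y u v : V} (hu : OnGeodesic G x y u)
    (hv : OnGeodesic G x y v) (hle : G.dist x u ≤ G.dist x v) : OnGeodesic G x v u := by
  rcases thin hG v hu with h | h
  · exact h
  · unfold OnGeodesic at *
    have : v = u := eq_of_dist_zero hG (by omega)
    subst this
    simp

lemma interval_eq (hG : G.IsTree) {x y u v : V} (hu : OnGeodesic G x y u)
    (hv : OnGeodesic G x y v) (he : G.dist x u = G.dist x v) : u = v := by
  have := onGeodesic_of_le hG hu hv he.le
  unfold OnGeodesic at this
  exact eq_of_dist_zero hG (by omega)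

/-- If `a` is beyond the edge `(p, q)` and the half-tree of `(a, b)` points away from `p`, then
it is contained in the half-tree of `(p, q)`. -/
lemma halfTree_subset (hG : G.IsTree) {p q a b : V} (hpq : G.Adj p q) (hab : G.Adj a b)
    (ha : a ∈ halfTree G p q) (hp : p ∉ halfTree G a b) : halfTree G a b ⊆ halfTree G p q := by
  intro z hz
  by_contra hzn
  have h1 := dist_cross' hG hpq ha hzn
  have h2 := dist_cross' hG hab hz hp
  have c : G.dist z a = G.dist a z := SimpleGraph.dist_comm
  have c' : G.dist z p = G.dist p z := SimpleGraph.dist_comm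
  have : a = p := eq_of_dist_zero hG (by omega)
  subst this
  exact left_not_mem ha

lemma halfTree_subset_or (hG : G.IsTree) {p q a b : V} (hpq : G.Adj p q) (hab : G.Adj a b)
    (ha : a ∈ halfTree G p q) (hb : b ∈ halfTree G p q) :
    (halfTree G a b ⊆ halfTree G p q ∧ p ∉ halfTree G a b) ∨
      (halfTree G b a ⊆ halfTree G p q ∧ p ∉ halfTree G b a) := by
  by_cases hp : p ∈ halfTree G a b
  · have := (mem_or hG hab p).resolve_right (fun h => h.1 hp)
    exact Or.inr ⟨halfTree_subset hG hpq hab.symm hb this.2.1, this.2.1⟩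
  · exact Or.inl ⟨halfTree_subset hG hpq hab ha hp, hp⟩

/-- Two half-trees pointing away from each other's roots are disjoint. -/
lemma halfTree_disjoint (hG : G.IsTree) {p q a b : V} (hpq : G.Adj p q) (hab : G.Adj a b)
    (ha : a ∉ halfTree G p q) (hp : p ∉ halfTree G a b) (hne : a ≠ p) {z : V}
    (hz : z ∈ halfTree G p q) : z ∉ halfTree G a b := by
  intro hz'
  have h1 := dist_cross' hG hpq hz ha
  have h2 := dist_cross' hG hab hz' hp
  have c : G.dist p a = G.dist a p := SimpleGraph.dist_comm
  exact hne (eq_of_dist_zero hG (by omega))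

lemma nested (hG : G.IsTree) {p q a b : V} (hpq : G.Adj p q) (hab : G.Adj a b) :
    halfTree G a b ⊆ halfTree G p q ∨ halfTree G a b ⊆ halfTree G q p ∨
      halfTree G b a ⊆ halfTree G p q ∨ halfTree G b a ⊆ halfTree G q p := by
  have ma := mem_or hG hpq a
  have mb := mem_or hG hpq b
  by_cases ha : a ∈ halfTree G p q <;> by_cases hb : b ∈ halfTree G p q
  · have := halfTree_subset_or hG hpq hab ha hb
    tauto
  · obtain ⟨rfl, rfl⟩ := crossing hG hpq hab ha hb
    exact Or.inr (Or.inl subset_rfl)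
  · obtain ⟨rfl, rfl⟩ := crossing hG hpq hab.symm hb ha
    exact Or.inl subset_rfl
  · have := halfTree_subset_or hG hpq.symm hab (by tauto) (by tauto)
    tauto

/-- Nearest points on a geodesically closed set are unique. -/
lemma proj_unique (hG : G.IsTree) {C : Set V} (hC : GeodClosed G C) {x c c' : V} (hc : c ∈ C)
    (hc' : c' ∈ C) (h : ∀ y ∈ C, G.dist x c ≤ G.dist x y)
    (h' : ∀ y ∈ C, G.dist x c' ≤ G.dist x y) : c = c' := by
  by_contra hne
  obtain ⟨q, hq, hq1, hq2⟩ := exists_step hG hne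
  have hqC : q ∈ C := by
    refine hC c hc c' hc' q ?_
    unfold OnGeodesic
    have : G.dist c q = 1 := SimpleGraph.dist_eq_one_iff_adj.2 hq
    have c1 : G.dist c' q = G.dist q c' := SimpleGraph.dist_comm
    have c2 : G.dist c' c = G.dist c c' := SimpleGraph.dist_comm
    omega
  by_cases hx : x ∈ halfTree G c q
  · have := h q hqC
    rw [mem_halfTree] at hx
    omega
  · have h1 := dist_cross' hG hq hq2 hx
    have h2 := h' c hc
    have := dist_pos' hG hne
    have c1 : G.dist c' x = G.dist x c' := SimpleGraph.dist_comm
    have c2 : G.dist c' c = G.dist c c' := SimpleGraph.dist_comm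
    have c3 : G.dist c x = G.dist x c := SimpleGraph.dist_comm
    omega

lemma exists_proj {C : Set V} (hC : C.Nonempty) : ∃ p : V → V, IsProj G C p := by
  have : ∀ x, ∃ c, c ∈ C ∧ ∀ y ∈ C, G.dist x c ≤ G.dist x y := by
    intro x
    obtain ⟨c, hc, hmin⟩ := (measure (fun c => G.dist x c)).wf.has_min C hC
    exact ⟨c, hc, fun y hy => not_lt.1 (hmin y hy)⟩
  choose p hp using this
  exact ⟨p, hp⟩

/-! ### Automorphisms -/

lemma aut_dist {g : Equiv.Perm V} (hg : g ∈ autGroup G) (x y : V) :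
    G.dist (g x) (g y) = G.dist x y := by
  have key : ∀ g ∈ autGroup G, ∀ x y, G.Reachable x y → G.dist (g x) (g y) ≤ G.dist x y := by
    intro g hg x y hr
    obtain ⟨w, hw⟩ := hr.exists_walk_length_eq_dist
    have := SimpleGraph.dist_le (w.map (⟨g, fun {a b} h => (hg a b).2 h⟩ : G →g G))
    rw [SimpleGraph.Walk.length_map, hw] at this
    exact this
  have hreach : ∀ g ∈ autGroup G, ∀ x y, G.Reachable x y → G.Reachable (g x) (g y) :=
    fun g hg x y hr => hr.map (⟨g, fun {a b} h => (hg a b).2 h⟩ : G →g G)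
  by_cases hr : G.Reachable x y
  · refine le_antisymm (key g hg x y hr) ?_
    simpa using key g⁻¹ (inv_mem hg) (g x) (g y) (hreach g hg x y hr)
  · have : ¬ G.Reachable (g x) (g y) := fun h =>
      hr (by simpa using hreach g⁻¹ (inv_mem hg) _ _ h)
    rw [SimpleGraph.dist_eq_zero_of_not_reachable hr,
      SimpleGraph.dist_eq_zero_of_not_reachable this]

lemma aut_adj {g : Equiv.Perm V} (hg : g ∈ autGroup G) {x y : V} (h : G.Adj x y) :
    G.Adj (g x) (g y) := (hg x y).2 h

lemma aut_halfTree {g : Equiv.Perm V} (hg : g ∈ autGroup G) {p q z : V} :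
    g z ∈ halfTree G (g p) (g q) ↔ z ∈ halfTree G p q := by
  simp [mem_halfTree, aut_dist hg]

lemma aut_halfTree' {g : Equiv.Perm V} (hg : g ∈ autGroup G) {p q z : V} :
    z ∈ halfTree G (g p) (g q) ↔ g⁻¹ z ∈ halfTree G p q := by
  rw [← aut_halfTree hg (z := g⁻¹ z)]
  simp

lemma aut_onGeodesic {g : Equiv.Perm V} (hg : g ∈ autGroup G) {x y z : V} :
    OnGeodesic G (g x) (g y) (g z) ↔ OnGeodesic G x y z := by
  simp [OnGeodesic, aut_dist hg]

end Tree

/-! ### Hyperbolic elements, rays and transitivity on half-trees -/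

section Dynamics

variable {G : SimpleGraph V}

/-- The element `t` pushes the half-tree of `(a, b)` strictly into itself, hence is hyperbolic
with axis through `a` and `t a`. -/
def Pushes (G : SimpleGraph V) (t : Equiv.Perm V) (a b : V) : Prop :=
  t ∈ autGroup G ∧ G.Adj a b ∧ t a ∈ halfTree G a b ∧
    ∀ z ∈ halfTree G a b, t z ∈ halfTree G a b

lemma Pushes.dist_pow (hG : G.IsTree) {t : Equiv.Perm V} {a b : V} (h : Pushes G t a b) (n : ℕ) :
    G.dist a ((t ^ n) a) = n * G.dist a (t a) := by
  obtain ⟨ht, hab, hta, hT⟩ := h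
  have hmem : ∀ n : ℕ, (t ^ (n + 1)) a ∈ halfTree G a b := by
    intro n
    induction n with
    | zero => simpa using hta
    | succ n ih =>
      rw [pow_succ', Equiv.Perm.mul_apply]
      exact hT _ ih
  have ha : a ∉ halfTree G (t a) (t b) := by
    intro h
    rw [aut_halfTree' ht] at h
    have := hT _ h
    simp only [Equiv.Perm.coe_inv, Equiv.apply_symm_apply] at this
    exact left_not_mem this
  induction n with
  | zero => simp
  | succ n ih =>
    rcases n with _ | n
    · simp
    · have h1 : (t ^ (n + 1 + 1)) a ∈ halfTree G (t a) (t b) := by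
        rw [pow_succ', Equiv.Perm.mul_apply, aut_halfTree ht]
        exact hmem n
      have h2 := dist_cross' hG (aut_adj ht hab) h1 ha
      have h3 : G.dist ((t ^ (n + 1 + 1)) a) (t a) = G.dist a ((t ^ (n + 1)) a) := by
        rw [pow_succ', Equiv.Perm.mul_apply, aut_dist ht, G.dist_comm]
      rw [G.dist_comm, h2, h3, ih, G.dist_comm (u := t a)]
      ring

lemma Pushes.pos (hG : G.IsTree) {t : Equiv.Perm V} {a b : V} (h : Pushes G t a b) :
    0 < G.dist a (t a) := by
  refine dist_pos' hG fun he => ?_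
  have := h.2.2.1
  rw [← he] at this
  exact left_not_mem this

lemma exists_at_dist (hG : G.IsTree) (x y : V) (k : ℕ) (hk : k ≤ G.dist x y) :
    ∃ v, OnGeodesic G x y v ∧ G.dist x v = k := by
  induction k with
  | zero => exact ⟨x, onGeodesic_left _ _, G.dist_self⟩
  | succ k ih =>
    obtain ⟨v, hv, hvk⟩ := ih (by omega)
    have hvy : v ≠ y := by rintro rfl; omega
    obtain ⟨a, hva, ha, -⟩ := exists_step hG hvy
    have c1 : G.dist y v = G.dist v y := SimpleGraph.dist_comm
    have c2 : G.dist y a = G.dist a y := SimpleGraph.dist_comm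
    have t1 := tri hG x v a
    have t2 := tri hG x a y
    have : G.dist v a = 1 := SimpleGraph.dist_eq_one_iff_adj.2 hva
    unfold OnGeodesic at *
    exact ⟨a, by omega, by omega⟩

/-- A sequence marching to infinity along nested geodesics spans a ray. -/
lemma exists_ray (hG : G.IsTree) {A : ℕ → V} {ℓ : ℕ} (hℓ : 0 < ℓ)
    (hA : ∀ n, G.dist (A 0) (A n) = n * ℓ)
    (hmono : ∀ n m, n ≤ m → OnGeodesic G (A 0) (A m) (A n)) :
    ∃ r : ℕ → V, IsRay G r ∧
      (∀ k, G.dist (A 0) (r k) = k ∧ ∃ n, OnGeodesic G (A 0) (A n) (r k)) ∧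
      ∀ n z, OnGeodesic G (A 0) (A n) z → z ∈ Set.range r := by
  have hI : ∀ n m z, n ≤ m → OnGeodesic G (A 0) (A n) z → OnGeodesic G (A 0) (A m) z :=
    fun n m z hnm hz => interval_convex hG (A 0) (A m) (A 0) (onGeodesic_left _ _) (A n)
      (hmono n m hnm) z hz
  have hex : ∀ k, ∃ v, G.dist (A 0) v = k ∧ ∃ n, OnGeodesic G (A 0) (A n) v := by
    intro k
    obtain ⟨v, hv, hk⟩ := exists_at_dist hG (A 0) (A k) k
      (by rw [hA]; exact Nat.le_mul_of_pos_right k hℓ)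
    exact ⟨v, hk, k, hv⟩
  choose r hr using hex
  refine ⟨r, ⟨?_, ?_⟩, hr, ?_⟩
  · intro i j hij
    rw [← (hr i).1, ← (hr j).1, hij]
  · intro k
    obtain ⟨h1, n, hn⟩ := hr k
    obtain ⟨h2, m, hm⟩ := hr (k + 1)
    have hn' := hI n (max n m) _ (le_max_left _ _) hn
    have hm' := hI m (max n m) _ (le_max_right _ _) hm
    have := onGeodesic_of_le hG hn' hm' (by omega)
    unfold OnGeodesic at this
    exact SimpleGraph.dist_eq_one_iff_adj.1 (by omega)
  · intro n z hz
    refine ⟨G.dist (A 0) z, ?_⟩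
    obtain ⟨h2, m, hm⟩ := hr (G.dist (A 0) z)
    exact interval_eq hG (hI m (max n m) _ (le_max_right _ _) hm)
      (hI n (max n m) _ (le_max_left _ _) hz) h2

/-- The image of a walk sequence is geodesically closed: it must pass through every vertex
separating two of its points. -/
lemma seq_convex (hG : G.IsTree) {r : ℕ → V} (hr : ∀ n, G.Adj (r n) (r (n + 1))) :
    GeodClosed G (Set.range r) := by
  have key : ∀ i j, i ≤ j → ∀ z, OnGeodesic G (r i) (r j) z → z ∈ Set.range r := by
    intro i j hij z hz
    by_cases hzi : z = r i
    · exact ⟨i, hzi.symm⟩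
    obtain ⟨q, hq, -, hqi⟩ := exists_step hG hzi
    have hj : r j ∉ halfTree G z q := fun hj =>
      left_not_mem (halfTree_convex hG hq _ hqi _ hj z hz)
    by_contra hzr
    apply hj
    refine Nat.le_induction hqi (fun k _ ih => ?_) j hij
    by_contra hk
    exact hzr ⟨k + 1, (crossing hG hq (hr k) ih hk).2⟩
  rintro _ ⟨i, rfl⟩ _ ⟨j, rfl⟩ z hz
  rcases le_total i j with h | h
  · exact key i j h z hz
  · exact key j i h z hz.symm

/-- If every group element maps a tail of a sequence marching to an end into the ray spanned by
the sequence, the end is stabilized. -/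
lemma stabilizesEnd_of (hG : G.IsTree) {H : Subgroup (Equiv.Perm V)} {A : ℕ → V} {ℓ : ℕ}
    (hℓ : 0 < ℓ) (hA : ∀ n, G.dist (A 0) (A n) = n * ℓ)
    (hmono : ∀ n m, n ≤ m → OnGeodesic G (A 0) (A m) (A n))
    (hmap : ∀ h ∈ H, ∃ m₀, ∀ m ≥ m₀, ∃ n, OnGeodesic G (A 0) (A n) (h (A m))) :
    ∃ r, IsRay G r ∧ StabilizesEnd G H r := by
  have hI : ∀ n m z, n ≤ m → OnGeodesic G (A 0) (A n) z → OnGeodesic G (A 0) (A m) z :=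
    fun n m z hnm hz => interval_convex hG (A 0) (A m) (A 0) (onGeodesic_left _ _) (A n)
      (hmono n m hnm) z hz
  obtain ⟨r, hray, hr, hr'⟩ := exists_ray hG hℓ hA hmono
  refine ⟨r, hray, fun π hπ r' hray' hsame => ?_⟩
  obtain ⟨m₀, hm₀⟩ := hmap π hπ
  -- any ray equivalent to `r` contains a tail of the sequence
  have htail : ∃ M, ∀ n ≥ M, A n ∈ Set.range r' := by
    have hinf : (r ⁻¹' (Set.range r' ∩ Set.range r)).Infinite :=
      Set.Infinite.preimage hsame Set.inter_subset_right
    obtain ⟨k₀, hk₀, -⟩ := hinf.exists_gt 0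
    refine ⟨k₀, fun n hn => ?_⟩
    obtain ⟨k, hk, hkn⟩ := hinf.exists_gt (n * ℓ)
    refine seq_convex hG hray'.2 _ hk₀.1 _ hk.1 _ ?_
    obtain ⟨d₀, n₀, hn₀⟩ := hr k₀
    obtain ⟨d₁, n₁, hn₁⟩ := hr k
    have hnl : n ≤ n * ℓ := Nat.le_mul_of_pos_right n hℓ
    have dn := hA n
    set m := max n (max n₀ n₁)
    have e₀ := hI n₀ m _ (by omega) hn₀
    have e₁ := hI n₁ m _ (by omega) hn₁
    have e := hmono n m (by omega)
    have f₀ := onGeodesic_of_le hG e₀ e (by omega)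
    have f₁ := onGeodesic_of_le hG e e₁ (by omega)
    have t := tri hG (A 0) (r k₀) (r k)
    have t' := tri hG (r k₀) (A n) (r k)
    unfold OnGeodesic at *
    omega
  obtain ⟨M, hM⟩ := htail
  refine Set.infinite_of_injective_forall_mem (f := fun n => π (A (n + (M + m₀)))) ?_ ?_
  · intro i j hij
    have h1 := π.injective hij
    have h2 := hA (i + (M + m₀))
    rw [h1, hA] at h2
    have := Nat.eq_of_mul_eq_mul_right hℓ h2
    omega
  · intro n
    refine ⟨?_, ?_⟩
    · obtain ⟨k, hk⟩ := hM (n + (M + m₀)) (by omega)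
      exact ⟨k, by simp [hk]⟩
    · obtain ⟨k, hk⟩ := hm₀ (n + (M + m₀)) (by omega)
      exact hr' _ _ hk

/-- Otherwise the vertices whose orbit avoids the half-tree form an invariant subtree. -/
lemma exists_mem_halfTree (hG : G.IsTree) {H : Subgroup (Equiv.Perm V)} (hH : H ≤ autGroup G)
    (hsub : NoInvariantSubtree G H) {p q : V} (hpq : G.Adj p q) (v : V) :
    ∃ h ∈ H, h v ∈ halfTree G p q := by
  by_contra! hcon
  refine hsub ⟨{z | ∀ h ∈ H, h z ∉ halfTree G p q}, ⟨v, hcon⟩, ?_, ?_, ?_⟩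
  · intro huniv
    have : q ∈ {z | ∀ h ∈ H, h z ∉ halfTree G p q} := huniv ▸ Set.mem_univ q
    exact this 1 H.one_mem (right_mem hpq)
  · intro x hx y hy z hz h hh
    rw [← mem_swap_iff hG hpq]
    refine halfTree_convex hG hpq.symm _ ((mem_swap_iff hG hpq).2 (hx h hh)) _
      ((mem_swap_iff hG hpq).2 (hy h hh)) _ ((aut_onGeodesic (hH hh)).2 hz)
  · intro π hπ
    ext z
    constructor
    · rintro ⟨y, hy, rfl⟩ h hh
      exact hy (h * π) (H.mul_mem hh hπ)
    · intro hz
      exact ⟨π⁻¹ z, fun h hh => hz (h * π⁻¹) (H.mul_mem hh (H.inv_mem hπ)), by simp⟩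

/-- Moving `a` into a smaller half-tree, which exists by ramification, brings its neighbour `b`
along. -/
lemma exists_edge_halfTree (hG : G.IsTree) {H : Subgroup (Equiv.Perm V)} (hH : H ≤ autGroup G)
    (hsub : NoInvariantSubtree G H) {r : V} (hram : IsRamification G r) {p q a b : V}
    (hpq : G.Adj p q) (hab : G.Adj a b) :
    ∃ h ∈ H, h a ∈ halfTree G p q ∧ h b ∈ halfTree G p q := by
  obtain ⟨h, hh, hx⟩ := exists_mem_halfTree hG hH hsub hpq r
  have hc : ∃ c, G.Adj (h r) c ∧ p ∉ halfTree G (h r) c := by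
    obtain ⟨u, v, -, huv, -, -, hu, hv, -⟩ := hram
    by_contra! hcon
    refine huv (h.injective (step_unique hG (aut_adj (hH hh) hu) (aut_adj (hH hh) hv)
      (hcon _ (aut_adj (hH hh) hu)) (hcon _ (aut_adj (hH hh) hv))))
  obtain ⟨c, hxc, hpc⟩ := hc
  have hss := halfTree_subset hG hpq hxc hx hpc
  obtain ⟨k, hk, hka⟩ := exists_mem_halfTree hG hH hsub hxc a
  refine ⟨k, hk, hss hka, ?_⟩
  by_contra hkb
  obtain ⟨h1, h2⟩ := crossing hG hpq (aut_adj (hH hk) hab) (hss hka) hkb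
  rw [h1] at hka
  obtain ⟨-, h4⟩ := crossing hG hxc hpq.symm hka hpc
  rw [h4] at hx
  exact left_not_mem hx

/-- On a ramified tree, a group with no invariant subtree and no fixed end can move every
half-tree into every other one. Otherwise there is a bad half-tree that a hyperbolic `τ ∈ H`
maps into itself; its images under the powers of `τ⁻¹` are bad and exhaust the tree, which forces
all translates of the edge `{a, b}` to be oriented consistently, and the repelling end of `τ` is
fixed by `H`. -/
lemma exists_map_into (hG : G.IsTree) {H : Subgroup (Equiv.Perm V)} (hH : H ≤ autGroup G)
    (hsub : NoInvariantSubtree G H) (hend : NoStabilizedEnd G H) {r : V}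
    (hram : IsRamification G r) {p q a b : V} (hpq : G.Adj p q) (hab : G.Adj a b) :
    ∃ h ∈ H, ∀ z ∈ halfTree G a b, h z ∈ halfTree G p q := by
  by_contra hbad
  -- a half-tree is bad if it contains no translate of `halfTree G a b`
  set Bad : V → V → Prop := fun x y => ¬ ∃ h ∈ H, ∀ z ∈ halfTree G a b, h z ∈ halfTree G x y
    with hBad
  have hstep : ∀ x y, G.Adj x y → Bad x y → ∀ h ∈ H, h a ∈ halfTree G x y →
      h b ∈ halfTree G x y →
        halfTree G (h b) (h a) ⊆ halfTree G x y ∧ x ∉ halfTree G (h b) (h a) := by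
    intro x y hxy hB h hh h1 h2
    rcases halfTree_subset_or hG hxy (aut_adj (hH hh) hab) h1 h2 with h3 | h3
    · exact absurd ⟨h, hh, fun z hz => h3.1 ((aut_halfTree (hH hh)).2 hz)⟩ hB
    · exact h3
  have htrans : ∀ x y, Bad x y → ∀ g ∈ H, Bad (g x) (g y) := by
    rintro x y hB g hg ⟨h, hh, hz⟩
    refine hB ⟨g⁻¹ * h, H.mul_mem (H.inv_mem hg) hh, fun z hzz => ?_⟩
    exact (aut_halfTree' (hH hg)).1 (hz z hzz)
  obtain ⟨h₁, hh₁, e1, e2⟩ := exists_edge_halfTree hG hH hsub hram hpq hab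
  have s1 := hstep p q hpq hbad h₁ hh₁ e1 e2
  have hadj1 : G.Adj (h₁ b) (h₁ a) := aut_adj (hH hh₁) hab.symm
  have bad1 : Bad (h₁ b) (h₁ a) := by
    rintro ⟨h, hh, hz⟩
    exact hbad ⟨h, hh, fun z hzz => s1.1 (hz z hzz)⟩
  obtain ⟨h₂, hh₂, e3, e4⟩ := exists_edge_halfTree hG hH hsub hram hadj1 hab
  have s2 := hstep _ _ hadj1 bad1 h₂ hh₂ e3 e4
  set τ := h₂ * h₁⁻¹ with hτ
  have hτH : τ ∈ H := H.mul_mem hh₂ (H.inv_mem hh₁)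
  set α := h₁ b with hα
  set β := h₁ a with hβ
  have hτα : τ α = h₂ b := by simp [hτ, hα]
  have hτβ : τ β = h₂ a := by simp [hτ, hβ]
  have hpush : Pushes G τ α β := by
    refine ⟨hH hτH, hadj1, by rw [hτα]; exact e4, fun z hz => s2.1 ?_⟩
    rw [← hτα, ← hτβ]
    exact (aut_halfTree (hH hτH)).2 hz
  have hℓ := hpush.pos hG
  set ℓ := G.dist α (τ α) with hℓdef
  have hpw : ∀ n : ℕ, (τ ^ n)⁻¹ ∈ H := fun n => H.inv_mem (H.pow_mem hτH n)
  set A : ℕ → V := fun n => (τ ^ n)⁻¹ α with hAdef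
  set B : ℕ → V := fun n => (τ ^ n)⁻¹ β with hBdef
  have hAB : ∀ n, G.Adj (A n) (B n) := fun n => aut_adj (hH (hpw n)) hadj1
  have hbadn : ∀ n, Bad (A n) (B n) := fun n => htrans _ _ bad1 _ (hpw n)
  have hdist : ∀ n m, n ≤ m → G.dist (A n) (A m) = (m - n) * ℓ := by
    intro n m hnm
    rw [← hpush.dist_pow hG, ← aut_dist (hH (H.pow_mem hτH m))]
    have h1 : (τ ^ m) (A n) = (τ ^ (m - n)) α := by
      obtain ⟨k, rfl⟩ := Nat.exists_eq_add_of_le hnm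
      rw [add_tsub_cancel_left, add_comm, pow_add, Equiv.Perm.mul_apply]
      simp [hAdef]
    have h2 : (τ ^ m) (A m) = α := by simp [hAdef]
    rw [h1, h2, G.dist_comm]
  have hA : ∀ n, G.dist (A 0) (A n) = n * ℓ := fun n => by simpa using hdist 0 n (Nat.zero_le _)
  have hmono : ∀ n m, n ≤ m → OnGeodesic G (A 0) (A m) (A n) := by
    intro n m hnm
    unfold OnGeodesic
    rw [hA, hA, hdist n m hnm, ← add_mul]
    congr 1
    omega
  -- every half-tree of the sequence, except the first, contains `A 0`
  have hA0 : ∀ n, 0 < n → A 0 ∈ halfTree G (A n) (B n) := by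
    intro n hn
    refine (aut_halfTree' (hH (hpw n))).2 ?_
    simp only [inv_inv, hAdef, pow_zero, inv_one, Equiv.Perm.one_apply]
    obtain ⟨k, rfl⟩ := Nat.exists_eq_add_of_lt hn
    simp only [zero_add]
    induction k with
    | zero => simpa using hpush.2.2.1
    | succ k ih =>
      rw [pow_succ', Equiv.Perm.mul_apply]
      exact hpush.2.2.2 _ (ih (by omega))
  -- the half-trees of the sequence exhaust the tree
  have hexh : ∀ z n, G.dist z (A 0) < n → z ∈ halfTree G (A n) (B n) := by
    intro z n hn
    by_contra hz
    have h1 := dist_cross' hG (hAB n) (hA0 n (by omega)) hz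
    rw [hA n] at h1
    have h2 : n ≤ n * ℓ := Nat.le_mul_of_pos_right n hℓ
    rw [G.dist_comm] at hn
    omega
  refine hend (stabilizesEnd_of hG hℓ hA hmono fun h hh => ?_)
  refine ⟨G.dist (h (A 0)) (A 0) + 1, fun m hm => ?_⟩
  set n := G.dist (h (A m)) (A 0) + G.dist (h (B m)) (A 0) + 1 with hn
  refine ⟨n, ?_⟩
  have hmem : A n ∉ halfTree G (h (A m)) (h (B m)) := by
    have := hstep (A n) (B n) (hAB n) (hbadn n) (h * (τ ^ m)⁻¹ * h₁)
      (H.mul_mem (H.mul_mem hh (hpw m)) hh₁) (hexh _ _ (by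
        change G.dist (h (B m)) (A 0) < n
        omega)) (hexh _ _ (by
        change G.dist (h (A m)) (A 0) < n
        omega))
    exact this.2
  have hon : OnGeodesic G (h (A 0)) (A n) (h (A m)) :=
    onGeodesic_cross hG (aut_adj (hH hh) (hAB m))
      ((aut_halfTree (hH hh)).2 (hA0 m (by omega))) hmem
  rcases thin hG (A 0) hon with h1 | h1
  · exfalso
    unfold OnGeodesic at h1
    rw [aut_dist (hH hh), hA] at h1
    have : m ≤ m * ℓ := Nat.le_mul_of_pos_right m hℓ
    omega
  · exact h1

end Dynamics

/-! ### Bounded products -/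

section Products

variable {Γ : Type*} [Group Γ]

/-- `x` is a product of at most `n` elements of `S`. -/
def ProdLE (S : Set Γ) (n : ℕ) (x : Γ) : Prop :=
  ∃ l : List Γ, l.length ≤ n ∧ (∀ y ∈ l, y ∈ S) ∧ l.prod = x

lemma ProdLE.mono {S : Set Γ} {n m : ℕ} {x : Γ} (h : ProdLE S n x) (hnm : n ≤ m) :
    ProdLE S m x := by
  obtain ⟨l, h1, h2⟩ := h
  exact ⟨l, h1.trans hnm, h2⟩

lemma ProdLE.mul {S : Set Γ} {n m : ℕ} {x y : Γ} (hx : ProdLE S n x) (hy : ProdLE S m y) :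
    ProdLE S (n + m) (x * y) := by
  obtain ⟨l, h1, h2, rfl⟩ := hx
  obtain ⟨l', h1', h2', rfl⟩ := hy
  refine ⟨l ++ l', by simp; omega, fun z hz => ?_, by simp⟩
  rcases List.mem_append.1 hz with h | h
  · exact h2 z h
  · exact h2' z h

lemma ProdLE.single {S : Set Γ} {x : Γ} (hx : x ∈ S) : ProdLE S 1 x :=
  ⟨[x], by simp, by simpa using hx, by simp⟩

lemma ProdLE.trans {S S' : Set Γ} {n m : ℕ} {x : Γ} (h : ProdLE S n x)
    (hS : ∀ y ∈ S, ProdLE S' m y) : ProdLE S' (n * m) x := by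
  obtain ⟨l, h1, h2, rfl⟩ := h
  have key : ∀ l : List Γ, (∀ y ∈ l, y ∈ S) → ProdLE S' (l.length * m) l.prod := by
    intro l hl
    induction l with
    | nil => exact ⟨[], by simp, by simp, by simp⟩
    | cons y l ih =>
      rw [List.prod_cons, List.length_cons]
      refine ((hS y (hl y (by simp))).mul (ih fun z hz => hl z (by simp [hz]))).mono ?_
      rw [add_mul]
      omega
  exact (key l h2).mono (Nat.mul_le_mul_right m h1)

/-- The conjugates of `g` and `g⁻¹` by elements of `N`. -/
def conjs (N : Subgroup Γ) (g : Γ) : Set Γ :=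
  {x | ∃ c ∈ N, x = c * g * c⁻¹ ∨ x = c * g⁻¹ * c⁻¹}

lemma ProdLE.conj {N : Subgroup Γ} {g x c : Γ} {n : ℕ} (h : ProdLE (conjs N g) n x)
    (hc : c ∈ N) : ProdLE (conjs N g) n (c * x * c⁻¹) := by
  obtain ⟨l, h1, h2, rfl⟩ := h
  refine ⟨l.map (MulAut.conj c), by simpa using h1, ?_, ?_⟩
  · intro y hy
    obtain ⟨z, hz, rfl⟩ := List.mem_map.1 hy
    obtain ⟨d, hd, rfl | rfl⟩ := h2 z hz
    · exact ⟨c * d, N.mul_mem hc hd, Or.inl (by simp [mul_assoc])⟩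
    · exact ⟨c * d, N.mul_mem hc hd, Or.inr (by simp [mul_assoc])⟩
  · rw [← map_list_prod, MulAut.conj_apply]

lemma ProdLE.inv {N : Subgroup Γ} {g x : Γ} {n : ℕ} (h : ProdLE (conjs N g) n x) :
    ProdLE (conjs N g) n x⁻¹ := by
  obtain ⟨l, h1, h2, rfl⟩ := h
  refine ⟨(l.map fun y => y⁻¹).reverse, by simpa using h1, ?_, ?_⟩
  · intro y hy
    obtain ⟨z, hz, rfl⟩ := List.mem_map.1 (List.mem_reverse.1 hy)
    obtain ⟨d, hd, rfl | rfl⟩ := h2 z hz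
    · exact ⟨d, hd, Or.inr (by simp [mul_assoc])⟩
    · exact ⟨d, hd, Or.inl (by simp [mul_assoc])⟩
  · exact (List.prod_inv_reverse l).symm

end Products

/-! ### Elements of `G⁺` -/

section Plus

variable {G : SimpleGraph V} {H : Subgroup (Equiv.Perm V)}

lemma edgeStab_sub_plus {σ : Equiv.Perm V} (h : σ ∈ edgeStabilizers G H) :
    σ ∈ plusGroup G H := Subgroup.subset_closure h

lemma plus_le : plusGroup G H ≤ H := (Subgroup.closure_le H).2 fun _ h => h.1

lemma edgeStab_conj (hH : H ≤ autGroup G) {σ h : Equiv.Perm V} (hσ : σ ∈ edgeStabilizers G H)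
    (hh : h ∈ H) : h * σ * h⁻¹ ∈ edgeStabilizers G H := by
  obtain ⟨h1, x, y, hxy, hx, hy⟩ := hσ
  refine ⟨H.mul_mem (H.mul_mem hh h1) (H.inv_mem hh), h x, h y, aut_adj (hH hh) hxy, ?_, ?_⟩
  · simp [hx]
  · simp [hy]

lemma edgeStab_inv {σ : Equiv.Perm V} (hσ : σ ∈ edgeStabilizers G H) :
    σ⁻¹ ∈ edgeStabilizers G H := by
  obtain ⟨h1, x, y, hxy, hx, hy⟩ := hσ
  exact ⟨H.inv_mem h1, x, y, hxy, Equiv.Perm.inv_eq_iff_eq.2 hx.symm,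
    Equiv.Perm.inv_eq_iff_eq.2 hy.symm⟩

lemma plus_conj (hH : H ≤ autGroup G) {g h : Equiv.Perm V} (hg : g ∈ plusGroup G H)
    (hh : h ∈ H) : h * g * h⁻¹ ∈ plusGroup G H := by
  induction hg using Subgroup.closure_induction with
  | mem x hx => exact edgeStab_sub_plus (edgeStab_conj hH hx hh)
  | one => simp
  | mul x y _ _ hx hy =>
    have : h * (x * y) * h⁻¹ = (h * x * h⁻¹) * (h * y * h⁻¹) := by group
    rw [this]
    exact Subgroup.mul_mem _ hx hy
  | inv x _ hx =>
    have : h * x⁻¹ * h⁻¹ = (h * x * h⁻¹)⁻¹ := by group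
    rw [this]
    exact Subgroup.inv_mem _ hx

lemma parity (hG : G.IsTree) (x y z : V) :
    (G.dist x y + G.dist y z + G.dist x z) % 2 = 0 := by
  induction hn : G.dist y z generalizing y with
  | zero =>
    obtain rfl := eq_of_dist_zero hG hn
    omega
  | succ n ih =>
    have hyz : y ≠ z := by rintro rfl; simp at hn
    obtain ⟨a, ha, h1, -⟩ := exists_step hG hyz
    have c1 : G.dist z y = G.dist y z := SimpleGraph.dist_comm
    have c2 : G.dist z a = G.dist a z := SimpleGraph.dist_comm
    have := ih a (by omega)
    have := adj_step hG ha x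
    omega

/-- Elements of `G⁺` move every vertex by an even distance, so they invert no edge. -/
lemma plus_even (hG : G.IsTree) (hH : H ≤ autGroup G) {g : Equiv.Perm V}
    (hg : g ∈ plusGroup G H) (v : V) : G.dist v (g v) % 2 = 0 := by
  induction hg using Subgroup.closure_induction generalizing v with
  | mem x hx =>
    obtain ⟨h1, u, -, -, hu, -⟩ := hx
    have h2 := parity hG v u (x v)
    have h3 := aut_dist (hH h1) u v
    have c : G.dist u v = G.dist v u := SimpleGraph.dist_comm
    rw [hu] at h3
    omega
  | one => simp
  | mul x y _ _ hx hy =>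
    have h1 := hx (y v)
    have h2 := hy v
    have := parity hG v (y v) (x (y v))
    rw [Equiv.Perm.mul_apply]
    omega
  | inv x _ hx =>
    have := hx (x⁻¹ v)
    rw [show x (x⁻¹ v) = v by simp, G.dist_comm] at this
    exact this

lemma plus_not_inversion (hG : G.IsTree) (hH : H ≤ autGroup G) {g : Equiv.Perm V}
    (hg : g ∈ plusGroup G H) {x y : V} (h : G.Adj x y) : g x ≠ y := by
  rintro rfl
  have := plus_even hG hH hg x
  rw [SimpleGraph.dist_eq_one_iff_adj.2 h] at this
  omega

lemma exists_fixed_moved (hG : G.IsTree) {g : Equiv.Perm V} {x : V} (hx : g x = x)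
    (hne : g ≠ 1) : ∃ u w, G.Adj u w ∧ g u = u ∧ g w ≠ w := by
  obtain ⟨v, hv⟩ : ∃ v, g v ≠ v := by
    by_contra! h
    exact hne (Equiv.ext h)
  obtain ⟨w, -⟩ := hG.connected.exists_walk_length_eq_dist x v
  obtain ⟨d, -, h1, h2⟩ := w.exists_boundary_dart {z | g z = z} hx hv
  exact ⟨d.fst, d.snd, d.adj, h1, h2⟩

/-- A nontrivial automorphism fixing an edge forces a vertex of degree at least three. -/
lemma exists_ramification (hG : G.IsTree) (hH : H ≤ autGroup G) {σ : Equiv.Perm V}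
    (hσ : σ ∈ edgeStabilizers G H) (hne : σ ≠ 1) : ∃ r, IsRamification G r := by
  obtain ⟨hσH, x, y, hxy, hx, hy⟩ := hσ
  obtain ⟨u, w, huw, hu, hw⟩ := exists_fixed_moved hG hx hne
  have hσ' := hH hσH
  have hn : ∃ n, G.Adj u n ∧ σ n = n := by
    by_cases hux : u = x
    · subst hux
      exact ⟨y, hxy, hy⟩
    · obtain ⟨n, hn, -, hxn⟩ := exists_step hG hux
      have h1 := (aut_halfTree hσ').2 hxn
      have h2 := aut_adj hσ' hn
      rw [hu] at h1 h2
      rw [hx] at h1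
      exact ⟨n, hn, step_unique hG h2 hn h1 hxn⟩
  obtain ⟨n, hun, hn⟩ := hn
  refine ⟨u, w, σ w, n, hw.symm, ?_, ?_, huw, ?_, hun⟩
  · rintro rfl
    exact hw hn
  · intro h
    exact hw (σ.injective (by rw [h, hn]))
  · have := aut_adj hσ' huw
    rwa [hu] at this

/-- Every nontrivial automorphism of a tree with a ramification point moves some half-tree off
itself. -/
lemma exists_displaced (hG : G.IsTree) {r : V} (hram : IsRamification G r) {g : Equiv.Perm V}
    (hg : g ∈ autGroup G) (hne : g ≠ 1) :
    ∃ p q, G.Adj p q ∧ ∀ z ∈ halfTree G p q, g z ∉ halfTree G p q := by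
  by_cases hfix : g r = r
  · obtain ⟨u, w, huw, hu, hw⟩ := exists_fixed_moved hG hfix hne
    refine ⟨u, w, huw, fun z hz hgz => hw ?_⟩
    have h1 := (aut_halfTree hg).2 hz
    have h2 := aut_adj hg huw
    rw [hu] at h1 h2
    exact step_unique hG h2 huw h1 hgz
  · obtain ⟨a, ha, h1, h2⟩ : ∃ a, G.Adj r a ∧ g r ∉ halfTree G r a ∧ g⁻¹ r ∉ halfTree G r a := by
      obtain ⟨a, b, c, hab, hac, hbc, ha, hb, hc⟩ := hram
      by_contra! hcon
      have key : ∀ c, G.Adj r c → g r ∈ halfTree G r c ∨ g⁻¹ r ∈ halfTree G r c :=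
        fun c hc => or_iff_not_imp_left.2 (hcon c hc)
      rcases key a ha with ka | ka <;> rcases key b hb with kb | kb <;>
        rcases key c hc with kc | kc <;>
        first
          | exact hab (step_unique hG ha hb ka kb)
          | exact hac (step_unique hG ha hc ka kc)
          | exact hbc (step_unique hG hb hc kb kc)
    refine ⟨r, a, ha, fun z hz hgz => ?_⟩
    refine halfTree_disjoint hG ha (aut_adj hg ha) h1 ?_ hfix hgz ((aut_halfTree hg).2 hz)
    rwa [aut_halfTree' hg]

/-- If `G⁺` is nontrivial, it contains for every half-tree an element moving its complement into
it: a conjugate by `H` of any `g ≠ 1` in `G⁺`. -/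
lemma exists_plus_swap (hG : G.IsTree) (hH : H ≤ autGroup G)
    (hsub : NoInvariantSubtree G H) (hend : NoStabilizedEnd G H) {r : V}
    (hram : IsRamification G r) {g : Equiv.Perm V} (hg : g ∈ plusGroup G H) (hne : g ≠ 1)
    {p q : V} (hpq : G.Adj p q) :
    ∃ s ∈ plusGroup G H, ∀ z ∉ halfTree G p q, s z ∈ halfTree G p q := by
  obtain ⟨a, b, hab, hd⟩ := exists_displaced hG hram (hH (plus_le hg)) hne
  obtain ⟨h, hh, hm⟩ := exists_map_into hG hH hsub hend hram hpq hab.symm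
  refine ⟨h * g * h⁻¹, plus_conj hH hg hh, fun z hz => ?_⟩
  have h1 : h⁻¹ z ∈ halfTree G a b := by
    by_contra hc
    have := hm _ ((mem_swap_iff hG hab).2 hc)
    simp only [Equiv.Perm.coe_inv, Equiv.apply_symm_apply] at this
    exact hz this
  exact hm _ ((mem_swap_iff hG hab).2 (hd _ h1))

/-- If `G⁺` is nontrivial, it can move every half-tree into every other one. -/
lemma exists_plus_map_into (hG : G.IsTree) (hH : H ≤ autGroup G)
    (hsub : NoInvariantSubtree G H) (hend : NoStabilizedEnd G H) {r : V}
    (hram : IsRamification G r) {g : Equiv.Perm V} (hg : g ∈ plusGroup G H) (hne : g ≠ 1)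
    {p q a b : V} (hpq : G.Adj p q) (hab : G.Adj a b) :
    ∃ s ∈ plusGroup G H, ∀ z ∈ halfTree G a b, s z ∈ halfTree G p q := by
  obtain ⟨s, hs, hs'⟩ := exists_plus_swap hG hH hsub hend hram hg hne hpq
  obtain ⟨t, ht, ht'⟩ := exists_plus_swap hG hH hsub hend hram hg hne hab.symm
  have e := fun z => mem_swap_iff hG hpq (z := z)
  have f := fun z => mem_swap_iff hG hab (z := z)
  have ht'' : ∀ z ∈ halfTree G a b, t z ∈ halfTree G b a := fun z hz =>
    ht' z (fun h => (f z).1 h hz)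
  rcases nested hG hpq hab with h | h | h | h
  · exact ⟨1, Subgroup.one_mem _, fun z hz => h hz⟩
  · exact ⟨s, hs, fun z hz => hs' _ ((e z).1 (h hz))⟩
  · exact ⟨t, ht, fun z hz => h (ht'' z hz)⟩
  · exact ⟨s * t, Subgroup.mul_mem _ hs ht, fun z hz => hs' _ ((e _).1 (h (ht'' z hz)))⟩

/-- For nontrivial `g ∈ G⁺`, the product of `g` with a suitable `G⁺`-conjugate of `g` is
hyperbolic. -/
lemma exists_pushes (hG : G.IsTree) (hH : H ≤ autGroup G)
    (hsub : NoInvariantSubtree G H) (hend : NoStabilizedEnd G H) {r : V}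
    (hram : IsRamification G r) {g : Equiv.Perm V} (hg : g ∈ plusGroup G H) (hne : g ≠ 1) :
    ∃ s ∈ plusGroup G H, ∃ a b, Pushes G (g * (s * g * s⁻¹)) a b := by
  obtain ⟨p, q, hpq, hd⟩ := exists_displaced hG hram (hH (plus_le hg)) hne
  obtain ⟨s, hs, hs'⟩ := exists_plus_swap hG hH hsub hend hram hg hne hpq
  have hinv : ∀ z ∉ halfTree G p q, s⁻¹ z ∈ halfTree G p q := by
    intro z hz
    by_contra hc
    have := hs' _ hc
    simp only [Equiv.Perm.coe_inv, Equiv.apply_symm_apply] at this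
    exact hz this
  have hchain : ∀ z, s⁻¹ z ∈ halfTree G p q →
      (g * (s * g * s⁻¹)) z ∈ halfTree G q p := fun z hz =>
    (mem_swap_iff hG hpq).2 (hd _ (hs' _ (hd _ hz)))
  refine ⟨s, hs, q, p, ?_, hpq.symm, ?_, ?_⟩
  · exact hH (plus_le (Subgroup.mul_mem _ hg
      (Subgroup.mul_mem _ (Subgroup.mul_mem _ hs hg) (Subgroup.inv_mem _ hs))))
  · apply hchain
    by_contra hq
    -- otherwise `s` would invert the edge `{p, q}`
    have hsaut := hH (plus_le (Subgroup.inv_mem _ hs))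
    obtain ⟨h1, -⟩ := crossing hG hpq (aut_adj hsaut hpq) (hinv p left_not_mem) hq
    exact plus_not_inversion hG hH (Subgroup.inv_mem _ hs) hpq h1
  · intro z hz
    exact hchain z (hinv z ((mem_swap_iff hG hpq).1 hz))

end Plus

/-! ### The axis of a hyperbolic element and the commutator trick -/

section Axis

variable {G : SimpleGraph V} {H : Subgroup (Equiv.Perm V)}

lemma Pushes.dist_zpow (hG : G.IsTree) {t : Equiv.Perm V} {a b : V} (h : Pushes G t a b)
    (i j : ℤ) : G.dist ((t ^ i) a) ((t ^ j) a) = (j - i).natAbs * G.dist a (t a) := by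
  have key : ∀ i j : ℤ, i ≤ j →
      G.dist ((t ^ i) a) ((t ^ j) a) = (j - i).natAbs * G.dist a (t a) := by
    intro i j hij
    obtain ⟨n, rfl⟩ := Int.le.dest hij
    rw [zpow_add, Equiv.Perm.mul_apply, aut_dist (Subgroup.zpow_mem _ h.1 i), zpow_natCast,
      h.dist_pow hG]
    simp
  rcases le_total i j with hij | hij
  · exact key i j hij
  · rw [G.dist_comm, key j i hij]
    congr 1
    omega

lemma Pushes.pow_injective (hG : G.IsTree) {t : Equiv.Perm V} {a b : V} (h : Pushes G t a b)
    (s : V) {i j : ℕ} (hij : (t ^ i) s = (t ^ j) s) : i = j := by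
  have key : ∀ m : ℕ, (t ^ m) s = s → m = 0 := by
    intro m hm
    by_contra hm0
    have hk : ∀ k : ℕ, (t ^ (m * k)) s = s := by
      intro k
      induction k with
      | zero => simp
      | succ k ih => rw [Nat.mul_succ, pow_add, Equiv.Perm.mul_apply, hm, ih]
    have h1 := h.dist_pow hG (m * (2 * G.dist a s + 1))
    have h2 := tri hG a s ((t ^ (m * (2 * G.dist a s + 1))) a)
    have h3 := aut_dist (Subgroup.pow_mem _ h.1 (m * (2 * G.dist a s + 1))) s a
    rw [hk] at h3
    have h4 := h.pos hG
    have c : G.dist s a = G.dist a s := SimpleGraph.dist_comm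
    have h5 : 2 * G.dist a s + 1 ≤ m * (2 * G.dist a s + 1) * G.dist a (t a) := by
      calc 2 * G.dist a s + 1 ≤ m * (2 * G.dist a s + 1) :=
            Nat.le_mul_of_pos_left _ (Nat.pos_of_ne_zero hm0)
        _ ≤ _ := Nat.le_mul_of_pos_right _ h4
    omega
  have key2 : ∀ i j : ℕ, i ≤ j → (t ^ i) s = (t ^ j) s → i = j := by
    intro i j hle hij
    obtain ⟨k, rfl⟩ := Nat.exists_eq_add_of_le hle
    rw [pow_add, Equiv.Perm.mul_apply] at hij
    have := key k ((t ^ i).injective hij).symm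
    omega
  rcases le_total i j with hle | hle
  · exact key2 i j hle hij
  · exact (key2 j i hle hij.symm).symm

/-- The axis through the orbit of `a` under the powers of `t`, as the union of the geodesics from
`t ^ (-n) a` to `t ^ n a`. It is meant for `t` hyperbolic with `a` on its axis. -/
def axisOf (G : SimpleGraph V) (t : Equiv.Perm V) (a : V) : Set V :=
  {z | ∃ n : ℕ, OnGeodesic G ((t ^ (-n : ℤ)) a) ((t ^ (n : ℤ)) a) z}

lemma axis_nested (hG : G.IsTree) {t : Equiv.Perm V} {a b : V} (h : Pushes G t a b) {n m : ℕ}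
    (hnm : n ≤ m) {z : V} (hz : OnGeodesic G ((t ^ (-n : ℤ)) a) ((t ^ (n : ℤ)) a) z) :
    OnGeodesic G ((t ^ (-m : ℤ)) a) ((t ^ (m : ℤ)) a) z := by
  have key : ∀ i : ℤ, -m ≤ i → i ≤ m →
      OnGeodesic G ((t ^ (-m : ℤ)) a) ((t ^ (m : ℤ)) a) ((t ^ i) a) := by
    intro i h1 h2
    unfold OnGeodesic
    rw [h.dist_zpow hG, h.dist_zpow hG, h.dist_zpow hG, ← add_mul]
    congr 1
    omega
  exact interval_convex hG _ _ _ (key (-n) (by omega) (by omega)) _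
    (key n (by omega) (by omega)) z hz

lemma axis_convex (hG : G.IsTree) {t : Equiv.Perm V} {a b : V} (h : Pushes G t a b) :
    GeodClosed G (axisOf G t a) := by
  rintro x ⟨n, hx⟩ y ⟨m, hy⟩ z hz
  exact ⟨max n m, interval_convex hG _ _ _ (axis_nested hG h (le_max_left n m) hx) _
    (axis_nested hG h (le_max_right n m) hy) z hz⟩

lemma zpow_mem_axis {t : Equiv.Perm V} {a : V} (i : ℤ) : (t ^ i) a ∈ axisOf G t a := by
  refine ⟨i.natAbs, ?_⟩
  rcases Int.natAbs_eq i with h | h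
  · rw [← h]
    exact onGeodesic_right _ _
  · rw [show (-(i.natAbs : ℤ)) = i by omega]
    exact onGeodesic_left _ _

lemma zpow_axis (hG : G.IsTree) {t : Equiv.Perm V} {a b : V} (h : Pushes G t a b) (i : ℤ) {z : V}
    (hz : z ∈ axisOf G t a) : (t ^ i) z ∈ axisOf G t a := by
  obtain ⟨n, hn⟩ := hz
  rw [← aut_onGeodesic (Subgroup.zpow_mem _ h.1 i), ← Equiv.Perm.mul_apply,
    ← Equiv.Perm.mul_apply, ← zpow_add, ← zpow_add] at hn
  exact axis_convex hG h _ (zpow_mem_axis _) _ (zpow_mem_axis _) _ hn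

lemma axis_isPathSet (hG : G.IsTree) {t : Equiv.Perm V} {a b : V} (h : Pushes G t a b) :
    IsPathSet G (axisOf G t a) := by
  refine ⟨⟨_, zpow_mem_axis 0⟩, axis_convex hG h, ?_⟩
  rintro v ⟨n₀, h₀⟩ x ⟨n₁, h₁⟩ y ⟨n₂, h₂⟩ z ⟨n₃, h₃⟩ hx hy hz
  set m := max (max n₀ n₁) (max n₂ n₃)
  have e₁ := axis_nested hG h (show n₁ ≤ m by omega) h₁
  have e₂ := axis_nested hG h (show n₂ ≤ m by omega) h₂
  have e₃ := axis_nested hG h (show n₃ ≤ m by omega) h₃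
  -- distances of `x`, `y`, `z` to the left endpoint take only two values
  have s₁ := adj_step hG hx ((t ^ (-m : ℤ)) a)
  have s₂ := adj_step hG hy ((t ^ (-m : ℤ)) a)
  have s₃ := adj_step hG hz ((t ^ (-m : ℤ)) a)
  have k₁ := interval_eq hG e₁ e₂
  have k₂ := interval_eq hG e₁ e₃
  have k₃ := interval_eq hG e₂ e₃
  by_contra! hcon
  have d₁ : G.dist ((t ^ (-m : ℤ)) a) x ≠ G.dist ((t ^ (-m : ℤ)) a) y := fun q => hcon.1 (k₁ q)
  have d₂ : G.dist ((t ^ (-m : ℤ)) a) x ≠ G.dist ((t ^ (-m : ℤ)) a) z := fun q => hcon.2.1 (k₂ q)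
  have d₃ : G.dist ((t ^ (-m : ℤ)) a) y ≠ G.dist ((t ^ (-m : ℤ)) a) z := fun q => hcon.2.2 (k₃ q)
  omega

/-- A path in a ramified tree misses some half-tree rooted on it. -/
lemma exists_halfTree_off (hG : G.IsTree) {r : V} (hram : IsRamification G r) {C : Set V}
    (hC : IsPathSet G C) :
    ∃ p q, G.Adj p q ∧ p ∈ C ∧ ∀ c ∈ C, c ∉ halfTree G p q := by
  obtain ⟨hne, hconv, hdeg⟩ := hC
  obtain ⟨w, hw⟩ : ∃ w, w ∉ C := by
    by_contra! hall
    obtain ⟨a, b, c, hab, hac, hbc, ha, hb, hc⟩ := hram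
    have := hdeg r (hall r) a (hall a) b (hall b) c (hall c) ha hb hc
    tauto
  obtain ⟨π, hπ⟩ := exists_proj (G := G) hne
  obtain ⟨hp, hmin⟩ := hπ w
  have hpw : π w ≠ w := fun h => hw (h ▸ hp)
  obtain ⟨q, hq, hq1, -⟩ := exists_step hG hpw
  refine ⟨π w, q, hq, hp, fun c hc hcq => ?_⟩
  have hqC : q ∈ C := by
    refine hconv _ hp c hc q ?_
    unfold OnGeodesic
    have : G.dist (π w) q = 1 := SimpleGraph.dist_eq_one_iff_adj.2 hq
    have s := adj_step hG hq c
    rw [mem_halfTree] at hcq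
    have c1 : G.dist c q = G.dist q c := SimpleGraph.dist_comm
    have c2 : G.dist c (π w) = G.dist (π w) c := SimpleGraph.dist_comm
    omega
  have := hmin q hqC
  omega

/-- If `f` is supported in a half-tree hanging off a `t`-invariant path at a vertex whose
`t`-orbit is free, property (P) yields the infinite product `k` of the elements
`t ^ i * f * t ^ (-i)`, `i ≥ 0`, and `f` is the commutator of `k` and `t`. -/
lemma commutator_trick (hG : G.IsTree) (hH : H ≤ autGroup G) (hP : PropertyP G H) {C : Set V}
    (hC : IsPathSet G C) {t : Equiv.Perm V} (ht : t ∈ H)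
    (htC : ∀ i : ℤ, ∀ c ∈ C, (t ^ i) c ∈ C) {a b : V} (hab : G.Adj a b) (haC : a ∈ C)
    (hoff : ∀ c ∈ C, c ∉ halfTree G a b) (hfree : ∀ i j : ℕ, (t ^ i) a = (t ^ j) a → i = j)
    {f : Equiv.Perm V} (hf : f ∈ H) (hfix : ∀ z ∉ halfTree G a b, f z = z) :
    ∃ k ∈ H, (∀ c ∈ C, k c = c) ∧ f = k * t * k⁻¹ * t⁻¹ := by
  classical
  obtain ⟨π, hπ⟩ := exists_proj (G := G) hC.1
  have huniq : ∀ x c, c ∈ C → (∀ y ∈ C, G.dist x c ≤ G.dist x y) → π x = c := fun x c hc h =>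
    proj_unique hG hC.2.1 (hπ x).1 hc (hπ x).2 h
  have hπt : ∀ x, π (t x) = t (π x) := by
    intro x
    refine huniq _ _ (by simpa using htC 1 _ (hπ x).1) fun y hy => ?_
    have h1 := (hπ x).2 (t⁻¹ y) (by simpa using htC (-1) y hy)
    rw [← aut_dist (hH ht) x (t⁻¹ y)] at h1
    rw [aut_dist (hH ht)]
    simpa using h1
  have hπk : ∀ k ∈ H, (∀ c ∈ C, k c = c) → ∀ x, π (k x) = π x := by
    intro k hk hkC x
    refine huniq _ _ (hπ x).1 fun y hy => ?_
    rw [← hkC _ (hπ x).1, ← hkC y hy, aut_dist (hH hk), aut_dist (hH hk)]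
    exact (hπ x).2 y hy
  have hfπ : ∀ z, π z ≠ a → f z = z := by
    intro z hz
    apply hfix
    intro hzT
    refine hz (huniq z a haC fun c hc => ?_)
    rw [dist_cross' hG hab hzT (hoff c hc)]
    omega
  have hfC : ∀ c ∈ C, f c = c := fun c hc => hfix c (hoff c hc)
  obtain ⟨gs, hgs1, hgs2⟩ : ∃ gs : V → Equiv.Perm V,
      (∀ i : ℕ, gs ((t ^ i) a) = t ^ i * f * (t ^ i)⁻¹) ∧
      ∀ c, (∀ i : ℕ, c ≠ (t ^ i) a) → gs c = 1 := by
    refine ⟨fun c => if h : ∃ i : ℕ, c = (t ^ i) a then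
      t ^ h.choose * f * (t ^ h.choose)⁻¹ else 1, fun i => ?_, fun c hc => ?_⟩
    · have h : ∃ j : ℕ, (t ^ i) a = (t ^ j) a := ⟨i, rfl⟩
      simp only [dif_pos h]
      rw [← hfree _ _ h.choose_spec]
    · exact dif_neg (fun ⟨i, hi⟩ => hc i hi)
  have hgsH : ∀ s ∈ C, gs s ∈ H ∧ ∀ c ∈ C, gs s c = c := by
    intro s _
    by_cases hs : ∃ i : ℕ, s = (t ^ i) a
    · obtain ⟨i, rfl⟩ := hs
      rw [hgs1]
      have hi := H.pow_mem ht i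
      refine ⟨H.mul_mem (H.mul_mem hi hf) (H.inv_mem hi), fun c hc => ?_⟩
      have h1 := hfC ((t ^ i)⁻¹ c) (by simpa using htC (-i) c hc)
      rw [Equiv.Perm.mul_apply, Equiv.Perm.mul_apply, h1]
      simp
    · rw [hgs2 s (by push Not at hs; exact hs)]
      exact ⟨H.one_mem, fun c _ => rfl⟩
  obtain ⟨k, ⟨hkH, hkC, hk⟩, -⟩ := hP C hC π hπ gs hgsH
  have hk' : ∀ x, k x = gs (π x) x := fun x => hk (π x) (hπ x).1 x rfl
  refine ⟨k, hkH, hkC, ?_⟩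
  have hcomm : f * t * k = k * t := by
    ext x
    simp only [Equiv.Perm.mul_apply]
    by_cases hx : ∃ i : ℕ, π x = (t ^ i) a
    · obtain ⟨i, hi⟩ := hx
      have h1 : f (t (k x)) = t (k x) := by
        apply hfπ
        rw [hπt, hπk k hkH hkC, hi, ← Equiv.Perm.mul_apply, ← pow_succ']
        intro h
        have := hfree (i + 1) 0 (by simpa using h)
        omega
      rw [h1, hk' x, hk' (t x), hπt, hi, hgs1, ← Equiv.Perm.mul_apply t (t ^ i), ← pow_succ',
        hgs1, pow_succ']
      simp
    · push Not at hx
      have h1 : k x = x := by rw [hk', hgs2 _ hx]; rfl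
      rw [h1, hk' (t x), hπt]
      by_cases hta : t (π x) = a
      · have := hgs1 0
        simp only [pow_zero, Equiv.Perm.one_apply, one_mul, inv_one, mul_one] at this
        rw [hta, this]
      · rw [hfπ (t x) (by rwa [hπt]), hgs2]
        · rfl
        · intro j hj
          rcases j with _ | j
          · exact hta (by simpa using hj)
          · rw [pow_succ', Equiv.Perm.mul_apply] at hj
            exact hx j (t.injective hj)
  rw [← hcomm]
  group

/-- Property (P) for an edge: an element fixing `x` and `y` splits into factors supported in the
two half-trees of the edge `{x, y}`. -/
lemma edge_split (hG : G.IsTree) (hP : PropertyP G H) {σ : Equiv.Perm V} (hσ : σ ∈ H)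
    {x y : V} (hxy : G.Adj x y) (hx : σ x = x) (hy : σ y = y) :
    ∃ f₁ ∈ H, ∃ f₂ ∈ H, (∀ z ∉ halfTree G y x, f₁ z = z) ∧
      (∀ z ∉ halfTree G x y, f₂ z = z) ∧ σ = f₁ * f₂ := by
  classical
  have hC : IsPathSet G ({x, y} : Set V) := by
    have h1 : G.dist x y = 1 := SimpleGraph.dist_eq_one_iff_adj.2 hxy
    have h2 : G.dist y x = 1 := SimpleGraph.dist_eq_one_iff_adj.2 hxy.symm
    refine ⟨⟨x, by simp⟩, ?_, ?_⟩
    · have key : ∀ u v z : V, G.dist u v ≤ 1 → OnGeodesic G u v z → z = u ∨ z = v := by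
        intro u v z huv hz
        unfold OnGeodesic at hz
        rcases Nat.eq_zero_or_pos (G.dist u z) with h | h
        · exact Or.inl (eq_of_dist_zero hG h).symm
        · exact Or.inr (eq_of_dist_zero hG (by omega))
      rintro u (rfl | rfl) v (rfl | rfl) z hz
      · have := key _ _ z (by simp) hz
        simp; tauto
      · have := key _ _ z h1.le hz
        simp; tauto
      · have := key _ _ z h2.le hz
        simp; tauto
      · have := key _ _ z (by simp) hz
        simp; tauto
    · rintro v - a (rfl | rfl) b (rfl | rfl) c (rfl | rfl) - - - <;> simp
  set π : V → V := fun z => if z ∈ halfTree G x y then y else x with hπdef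
  have hπ : IsProj G ({x, y} : Set V) π := by
    intro z
    have s := adj_step hG hxy z
    by_cases hz : z ∈ halfTree G x y
    · rw [hπdef]
      simp only [if_pos hz]
      rw [mem_halfTree] at hz
      refine ⟨by simp, ?_⟩
      rintro c (rfl | rfl) <;> omega
    · rw [hπdef]
      simp only [if_neg hz]
      rw [mem_halfTree] at hz
      refine ⟨by simp, ?_⟩
      rintro c (rfl | rfl) <;> omega
  obtain ⟨f, ⟨hfH, -, hf⟩, -⟩ := hP _ hC π hπ (fun s => if s = x then σ else 1) (by
    intro s _
    by_cases hs : s = x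
    · simp only [if_pos hs]
      refine ⟨hσ, ?_⟩
      rintro c (rfl | rfl) <;> assumption
    · simp only [if_neg hs]
      exact ⟨H.one_mem, fun c _ => rfl⟩)
  have e := fun z => mem_swap_iff hG hxy (z := z)
  have hf1 : ∀ z ∈ halfTree G y x, f z = σ z := by
    intro z hz
    have := hf x (by simp) z (by simp [hπdef, (e z).1 hz])
    simpa using this
  have hf2 : ∀ z ∉ halfTree G y x, f z = z := by
    intro z hz
    have hz' : z ∈ halfTree G x y := by
      by_contra h
      exact hz ((e z).2 h)
    have := hf y (by simp) z (by simp [hπdef, hz'])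
    simpa [hxy.ne'] using this
  refine ⟨f, hfH, f⁻¹ * σ, H.mul_mem (H.inv_mem hfH) hσ, hf2, fun z hz => ?_, by group⟩
  rw [Equiv.Perm.mul_apply, Equiv.Perm.inv_eq_iff_eq]
  exact (hf1 z ((e z).2 hz)).symm

/-- Uniform bound: every edge-stabilizing element is a product of at most eight
`G⁺`-conjugates of `g` and `g⁻¹`, for any nontrivial `g ∈ G⁺`. -/
lemma edgeStab_bounded (hG : G.IsTree) (hH : H ≤ autGroup G) (hP : PropertyP G H)
    (hsub : NoInvariantSubtree G H) (hend : NoStabilizedEnd G H) {r : V}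
    (hram : IsRamification G r) {g : Equiv.Perm V} (hg : g ∈ plusGroup G H) (hne : g ≠ 1)
    {σ : Equiv.Perm V} (hσ : σ ∈ edgeStabilizers G H) :
    ProdLE (conjs (plusGroup G H) g) 8 σ := by
  obtain ⟨s, hs, a, b, hpush⟩ := exists_pushes hG hH hsub hend hram hg hne
  set t := g * (s * g * s⁻¹) with ht
  have htN : t ∈ plusGroup G H := Subgroup.mul_mem _ hg
    (Subgroup.mul_mem _ (Subgroup.mul_mem _ hs hg) (Subgroup.inv_mem _ hs))
  have m1 : g ∈ conjs (plusGroup G H) g := ⟨1, Subgroup.one_mem _, Or.inl (by simp)⟩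
  have m2 : s * g * s⁻¹ ∈ conjs (plusGroup G H) g := ⟨s, hs, Or.inl rfl⟩
  have htP : ProdLE (conjs (plusGroup G H) g) 2 t :=
    (ProdLE.single m1).mul (ProdLE.single m2)
  have hC := axis_isPathSet hG hpush
  obtain ⟨p, q, hpq, hpC, hoff⟩ := exists_halfTree_off hG hram hC
  -- an element supported in a half-tree is conjugate in `G⁺` to one supported in a half-tree off
  -- the axis of `t`, hence is conjugate to a commutator with `t`
  have key : ∀ x y, G.Adj x y → ∀ f ∈ H, (∀ z ∉ halfTree G x y, f z = z) →
      ProdLE (conjs (plusGroup G H) g) 4 f := by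
    intro x y hxy f hf hfix
    obtain ⟨c, hc, hcm⟩ := exists_plus_map_into hG hH hsub hend hram hg hne hpq hxy
    have hcH := plus_le hc
    obtain ⟨k, hkH, hkC, hk⟩ := commutator_trick hG hH hP hC (plus_le htN)
      (fun i z hz => zpow_axis hG hpush i hz) hpq hpC hoff
      (fun i j => hpush.pow_injective hG p) (f := c * f * c⁻¹)
      (H.mul_mem (H.mul_mem hcH hf) (H.inv_mem hcH)) (by
        intro z hz
        have : f (c⁻¹ z) = c⁻¹ z := by
          apply hfix
          intro h
          have := hcm _ h
          simp only [Equiv.Perm.coe_inv, Equiv.apply_symm_apply] at this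
          exact hz this
        rw [Equiv.Perm.mul_apply, Equiv.Perm.mul_apply, this]
        simp)
    -- `k` fixes the axis pointwise, and the axis contains an edge
    have hkN : k ∈ plusGroup G H := by
      have ha : a ∈ axisOf G t a := by simpa using zpow_mem_axis (G := G) (t := t) (a := a) 0
      have hta : t a ∈ axisOf G t a := by
        simpa using zpow_mem_axis (G := G) (t := t) (a := a) 1
      have hne' : a ≠ t a := fun h => by
        have := hpush.pos hG
        rw [← h, SimpleGraph.dist_self] at this
        omega
      obtain ⟨n, hn, hn1, -⟩ := exists_step hG hne'
      have hnC : n ∈ axisOf G t a := by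
        refine hC.2.1 a ha _ hta n ?_
        unfold OnGeodesic
        have : G.dist a n = 1 := SimpleGraph.dist_eq_one_iff_adj.2 hn
        have c1 : G.dist (t a) n = G.dist n (t a) := SimpleGraph.dist_comm
        have c2 : G.dist (t a) a = G.dist a (t a) := SimpleGraph.dist_comm
        omega
      exact edgeStab_sub_plus ⟨hkH, a, n, hn, hkC a ha, hkC n hnC⟩
    have h4 : ProdLE (conjs (plusGroup G H) g) 4 (c * f * c⁻¹) := by
      rw [hk]
      exact (htP.conj hkN).mul htP.inv
    have h5 := h4.conj (Subgroup.inv_mem _ hc)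
    have h6 : c⁻¹ * (c * f * c⁻¹) * c⁻¹⁻¹ = f := by group
    rwa [h6] at h5
  obtain ⟨hσH, x, y, hxy, hx, hy⟩ := hσ
  obtain ⟨f₁, hf₁, f₂, hf₂, h1, h2, rfl⟩ := edge_split hG hP hσH hxy hx hy
  exact (key y x hxy.symm f₁ hf₁ h1).mul (key x y hxy f₂ hf₂ h2)

end Axis

/-! ### Bounded simplicity -/

/-- criterion for bounded simplicity of `G⁺`. -/
theorem boundedlySimple_iff_rotations (G : SimpleGraph V) (hG : G.IsTree)
    (H : Subgroup (Equiv.Perm V)) (hH : H ≤ autGroup G)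
    (hP : PropertyP G H) (hsub : NoInvariantSubtree G H)
    (hend : NoStabilizedEnd G H) :
    IsBoundedlySimple ↥(plusGroup G H) ↔
      ∃ K : ℕ,
        (∀ α ∈ plusGroup G H, IsTranslation G α →
          ∃ l : List (Equiv.Perm V), l.length ≤ K ∧
            (∀ ρ ∈ l, ρ ∈ plusGroup G H ∧ IsRotation ρ) ∧ l.prod = α) ∧
        (∀ α ∈ plusGroup G H, IsRotation α →
          ∃ l : List (Equiv.Perm V), l.length ≤ K ∧
            (∀ σ ∈ l, σ ∈ edgeStabilizers G H) ∧ l.prod = α) := by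
  constructor
  · rintro ⟨N, hN⟩
    -- a nontrivial edge-stabilizing element already bounds everything
    by_cases htriv : ∃ σ ∈ edgeStabilizers G H, σ ≠ 1
    · obtain ⟨σ, hσ, hne⟩ := htriv
      have key : ∀ α ∈ plusGroup G H, ∃ l : List (Equiv.Perm V), l.length ≤ N ∧
          (∀ ρ ∈ l, ρ ∈ edgeStabilizers G H) ∧ l.prod = α := by
        intro α hα
        by_cases hα1 : α = 1
        · exact ⟨[], by simp, by simp, by simp [hα1]⟩
        · obtain ⟨l, h1, h2, h3⟩ := hN ⟨σ, edgeStab_sub_plus hσ⟩ ⟨α, hα⟩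
            (fun h => hne (congrArg Subtype.val h)) (fun h => hα1 (congrArg Subtype.val h))
          refine ⟨l.map (plusGroup G H).subtype, by simpa using h1, ?_, ?_⟩
          · intro ρ hρ
            obtain ⟨x, hx, rfl⟩ := List.mem_map.1 hρ
            obtain ⟨c, rfl | rfl⟩ := h2 x hx
            · exact edgeStab_conj hH hσ (plus_le c.2)
            · exact edgeStab_conj hH (edgeStab_inv hσ) (plus_le c.2)
          · rw [← map_list_prod, h3]
            rfl
      refine ⟨N, fun α hα _ => ?_, fun α hα _ => key α hα⟩
      obtain ⟨l, h1, h2, h3⟩ := key α hα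
      refine ⟨l, h1, fun ρ hρ => ⟨edgeStab_sub_plus (h2 ρ hρ), ?_⟩, h3⟩
      obtain ⟨-, x, -, -, hx, -⟩ := h2 ρ hρ
      exact ⟨x, hx⟩
    · push Not at htriv
      have hbot : ∀ α ∈ plusGroup G H, α = 1 := by
        intro α hα
        have : plusGroup G H ≤ ⊥ := (Subgroup.closure_le _).2 fun σ hσ => htriv σ hσ
        exact this hα
      exact ⟨0, fun α hα _ => ⟨[], by simp, by simp, by simp [hbot α hα]⟩,
        fun α hα _ => ⟨[], by simp, by simp, by simp [hbot α hα]⟩⟩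
  · rintro ⟨K, hK1, hK2⟩
    refine ⟨(K * K + K) * 8, fun g h hg hh => ?_⟩
    have hg1 : (g : Equiv.Perm V) ≠ 1 := fun h => hg (Subtype.ext h)
    obtain ⟨σ, hσ, hne⟩ : ∃ σ ∈ edgeStabilizers G H, σ ≠ 1 := by
      by_contra! htriv
      have : plusGroup G H ≤ ⊥ := (Subgroup.closure_le _).2 fun σ hσ => htriv σ hσ
      exact hg1 (this g.2)
    obtain ⟨r, hram⟩ := exists_ramification hG hH hσ hne
    have hedge : ProdLE (edgeStabilizers G H) (K * K + K) (h : Equiv.Perm V) := by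
      by_cases hrot : IsRotation (h : Equiv.Perm V)
      · exact ProdLE.mono (hK2 h h.2 hrot) (by omega)
      · have htr : IsTranslation G (h : Equiv.Perm V) := by
          refine ⟨hrot, ?_⟩
          rintro ⟨x, y, hxy, hx, -⟩
          exact plus_not_inversion hG hH h.2 hxy hx
        have h1 : ProdLE {ρ | ρ ∈ plusGroup G H ∧ IsRotation ρ} K (h : Equiv.Perm V) :=
          hK1 h h.2 htr
        exact (h1.trans fun ρ hρ => hK2 ρ hρ.1 hρ.2).mono (by omega)
    obtain ⟨l, h1, h2, h3⟩ := hedge.trans fun σ hσ =>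
      edgeStab_bounded hG hH hP hsub hend hram g.2 hg1 hσ
    have hlN : ∀ x ∈ l, x ∈ plusGroup G H := by
      intro x hx
      obtain ⟨c, hc, rfl | rfl⟩ := h2 x hx
      · exact Subgroup.mul_mem _ (Subgroup.mul_mem _ hc g.2) (Subgroup.inv_mem _ hc)
      · exact Subgroup.mul_mem _ (Subgroup.mul_mem _ hc (Subgroup.inv_mem _ g.2))
          (Subgroup.inv_mem _ hc)
    lift l to List (plusGroup G H) using hlN
    refine ⟨l, by simpa using h1, fun x hx => ?_, ?_⟩
    · obtain ⟨c, hc, hcx⟩ := h2 x (List.mem_map_of_mem hx)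
      exact ⟨⟨c, hc⟩, hcx.imp (fun e => Subtype.ext e) (fun e => Subtype.ext e)⟩
    · refine Subtype.ext ?_
      rw [← h3]
      exact map_list_prod (plusGroup G H).subtype l

end BSTrees
end

section
/- Let (A, f) be a colored tree such that Aut_f⁺(A) is nontrivial. Then every nontrivial rotation belonging to Aut_f⁺(A) fixes some ramification point of A, and is a composition of two elements each of which belongs to the pointwise stabilizer in Aut_f(A) of some edge of A. -/
/-!
Let `α ≠ 1` lie in `Aut_f⁺(A)` and fix a vertex `v`.

If `α` fixes an edge, then `α = α * 1` is the required product, and since `A` is connected some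
fixed vertex has both a fixed neighbor `y` and a moved neighbor `z`; its neighbors `y`, `z`, `α z`
are distinct, so it is a ramification point (`exists_ramification_of_fixed_edge`).

Otherwise `α` moves every neighbor `w` of `v`. The point is that `v` is then a ramification point
(`isRamification_of_swap`). If not, the neighbors of `v` are exactly `w` and `α w`. Color the edges
of `A` with two colors so that two distinct edges sharing a vertex `x` have equal colors precisely
when `x` is a ramification point; on a tree this is possible because the other vertices have at
most two neighbors (`exists_edgeColoring`). Any automorphism preserves ramification points, hence
either preserves or exchanges the two colors globally (`edgeShift_eq`). An edge stabilizer must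
preserve them, so all of `Aut_f⁺(A)` does, whereas `α` takes the edge `{v, w}` to `{v, α w}`,
which has the other color.

Given a third neighbor `u` of `v`, let `σ` exchange the branches at `v` through `w` and `α w`,
by `α` on the first and `α⁻¹` on the second, and be the identity elsewhere (`exists_branchSwap`).
It preserves colors of vertices and fixes the edge `{v, u}`, while `α * σ⁻¹` fixes the edge
`{v, α w}`. Thus `α = (α * σ⁻¹) * σ` is the required product.
-/

open Pointwise

namespace BSTrees

universe u

variable {V : Type u} {I : Type*}

/-! ### Distances in trees -/

theorem exists_parent {G : SimpleGraph V} (hG : G.IsTree) (v x : V) (hx : x ≠ v) :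
    ∃ p, G.Adj x p ∧ G.dist v x = G.dist v p + 1 := by
  obtain ⟨p, hp⟩ := hG.connected.exists_walk_length_eq_dist x v
  cases p with
  | nil => exact absurd rfl hx
  | @cons _ q _ h p =>
    refine ⟨q, h, ?_⟩
    have h1 := SimpleGraph.dist_le p
    have h2 := hG.dist_eq_dist_add_one_of_adj v h
    rw [SimpleGraph.Walk.length_cons] at hp
    rw [SimpleGraph.dist_comm] at hp h1
    omega

/-- In a tree rooted at `v` every vertex has at most one parent. -/
theorem parent_unique {G : SimpleGraph V} (hG : G.IsTree) {v x p q : V}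
    (hp : G.Adj x p) (hq : G.Adj x q)
    (hdp : G.dist v x = G.dist v p + 1) (hdq : G.dist v x = G.dist v q + 1) : p = q := by
  obtain ⟨a, ha⟩ := hG.connected.exists_walk_length_eq_dist p v
  obtain ⟨b, hb⟩ := hG.connected.exists_walk_length_eq_dist q v
  have ha' : (SimpleGraph.Walk.cons hp a).IsPath :=
    SimpleGraph.Walk.isPath_of_length_eq_dist _ (by
      rw [SimpleGraph.Walk.length_cons, ha, SimpleGraph.dist_comm, ← hdp, SimpleGraph.dist_comm])
  have hb' : (SimpleGraph.Walk.cons hq b).IsPath :=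
    SimpleGraph.Walk.isPath_of_length_eq_dist _ (by
      rw [SimpleGraph.Walk.length_cons, hb, SimpleGraph.dist_comm, ← hdq, SimpleGraph.dist_comm])
  have := (hG.existsUnique_path x v).unique ha' hb'
  injection this

theorem dist_map_le {G : SimpleGraph V} (hG : G.IsTree) {α : Equiv.Perm V} (h : IsAut G α)
    (x y : V) : G.dist (α x) (α y) ≤ G.dist x y := by
  obtain ⟨p, hp⟩ := hG.connected.exists_walk_length_eq_dist x y
  let φ : G →g G := ⟨α, fun {a b} hab => (h a b).2 hab⟩
  have := SimpleGraph.dist_le (p.map φ)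
  rw [SimpleGraph.Walk.length_map, hp] at this
  exact this

theorem isAut_inv {G : SimpleGraph V} {α : Equiv.Perm V} (h : IsAut G α) : IsAut G α⁻¹ :=
  (autGroup G).inv_mem h

theorem dist_map {G : SimpleGraph V} (hG : G.IsTree) {α : Equiv.Perm V} (h : IsAut G α)
    (x y : V) : G.dist (α x) (α y) = G.dist x y := by
  apply le_antisymm (dist_map_le hG h x y)
  simpa using dist_map_le hG (isAut_inv h) (α x) (α y)

/-! ### Ramification points -/

theorem isRamification_map {G : SimpleGraph V} {α : Equiv.Perm V} (h : IsAut G α) {x : V}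
    (hx : IsRamification G x) : IsRamification G (α x) := by
  obtain ⟨a, b, c, hab, hac, hbc, ha, hb, hc⟩ := hx
  exact ⟨α a, α b, α c, by simpa, by simpa, by simpa,
    (h _ _).2 ha, (h _ _).2 hb, (h _ _).2 hc⟩

theorem isRamification_map_iff {G : SimpleGraph V} {α : Equiv.Perm V} (h : IsAut G α) {x : V} :
    IsRamification G (α x) ↔ IsRamification G x :=
  ⟨fun hx => by simpa using isRamification_map (isAut_inv h) hx, isRamification_map h⟩

theorem exists_ramification_of_fixed_edge {G : SimpleGraph V} (hG : G.IsTree)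
    {α : Equiv.Perm V} (h : IsAut G α) (hα1 : α ≠ 1) {a b : V} (hab : G.Adj a b)
    (ha : α a = a) (hb : α b = b) : ∃ r, α r = r ∧ IsRamification G r := by
  by_contra hno
  apply hα1
  -- Without a fixed ramification point, a fixed vertex with one fixed neighbor has all
  -- its neighbors fixed.
  have step : ∀ x y, α x = x → G.Adj x y → α y = y → ∀ z, G.Adj x z → α z = z := by
    intro x y hx hxy hy z hxz
    by_contra hz
    apply hno
    refine ⟨x, hx, y, z, α z, ?_, ?_, fun e => hz e.symm, hxy, hxz, ?_⟩
    · rintro rfl; exact hz hy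
    · intro e
      apply hz
      have : z = y := α.injective (e.symm.trans hy.symm)
      rw [this, hy]
    · have := (h x z).2 hxz
      rwa [hx] at this
  have walk : ∀ (x z : V) (_ : G.Walk x z), (∃ y, G.Adj x y ∧ α y = y) → α x = x → α z = z := by
    intro x z p
    induction p with
    | nil => exact fun _ hx => hx
    | @cons u v w huv p ih =>
      rintro ⟨y, hy, hy'⟩ hu
      exact ih ⟨u, huv.symm, hu⟩ (step u y hu hy hy' v huv)
  ext z
  obtain ⟨p⟩ := hG.connected a z
  exact walk a z p ⟨b, hab, hb⟩ ha

/-! ### A two-coloring of the edges -/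

open Classical in
/-- The color of the edge from `x` to its parent, in the tree rooted at `v` with parent function
`par`; the fuel `n` is meant to be `G.dist v x`. The edge from the root to `w` gets a color
different from that of the other edges at the root, and below the root the color changes exactly when
passing a non-ramification point. -/
noncomputable def parentColor (G : SimpleGraph V) (par : V → V) (v w : V) : ℕ → V → Bool
  | 0, _ => false
  | 1, x => decide (x = w)
  | n + 2, x =>
    xor (parentColor G par v w (n + 1) (par x)) (decide (¬ IsRamification G (par x)))

/-- A symmetric coloring `c x y` of the edges `{x, y}` of a tree for which two distinct edges at
`x` have equal colors exactly when `x` is a ramification point. A non-ramification root `v` serves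
to start the construction. -/
theorem exists_edgeColoring {G : SimpleGraph V} (hG : G.IsTree) {v w : V} (hvw : G.Adj v w)
    (hv : ¬ IsRamification G v) :
    ∃ c : V → V → Bool, (∀ x y, G.Adj x y → c x y = c y x) ∧
      ∀ x y z, G.Adj x y → G.Adj x z → y ≠ z → (c x y = c x z ↔ IsRamification G x) := by
  classical
  have hpar : ∀ x, ∃ p, x ≠ v → G.Adj x p ∧ G.dist v x = G.dist v p + 1 := by
    intro x
    by_cases hx : x = v
    · exact ⟨x, fun h => absurd hx h⟩
    · obtain ⟨p, hp⟩ := exists_parent hG v x hx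
      exact ⟨p, fun _ => hp⟩
  choose par hpar using hpar
  let l : V → Bool := fun x => parentColor G par v w (G.dist v x) x
  have hl1 : ∀ x, G.Adj v x → l x = decide (x = w) := by
    intro x hx
    simp only [l, SimpleGraph.dist_eq_one_iff_adj.2 hx, parentColor]
  have hl2 : ∀ x y, x ≠ v → G.Adj x y → G.dist v y = G.dist v x + 1 →
      l y = xor (l x) (decide (¬ IsRamification G x)) := by
    intro x y hx hxy hd
    have hyv : y ≠ v := by
      rintro rfl
      simp at hd
    have hpy : par y = x :=
      parent_unique hG (hpar y hyv).1 hxy.symm (hpar y hyv).2 hd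
    have hpos := hG.connected.pos_dist_of_ne (Ne.symm hx)
    obtain ⟨n, hn⟩ : ∃ n, G.dist v x = n + 1 := ⟨_, (Nat.succ_pred_eq_of_pos hpos).symm⟩
    simp only [l, hd, hn, parentColor, hpy]
  let c : V → V → Bool := fun x y => if G.dist v x < G.dist v y then l y else l x
  have hchild : ∀ x y, G.dist v y = G.dist v x + 1 → c x y = l y := by
    intro x y h
    simp only [c]
    rw [if_pos (by omega)]
  have hparent : ∀ x y, G.dist v x = G.dist v y + 1 → c x y = l x := by
    intro x y h
    simp only [c]
    rw [if_neg (by omega)]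
  -- The edge to the parent against an edge to a child.
  have hmix : ∀ x y z, x ≠ v → G.Adj x z → G.dist v x = G.dist v y + 1 →
      G.dist v z = G.dist v x + 1 → (c x y = c x z ↔ IsRamification G x) := by
    intro x y z hx hxz hy hz
    rw [hparent x y hy, hchild x z hz, hl2 x z hx hxz hz]
    by_cases hr : IsRamification G x <;> simp [hr]
  refine ⟨c, ?_, ?_⟩
  · intro x y hxy
    rcases hG.dist_eq_dist_add_one_of_adj v hxy with h | h
    · rw [hparent x y h, hchild y x h]
    · rw [hparent y x h, hchild x y h]
  · intro x y z hxy hxz hyz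
    by_cases hx : x = v
    · subst hx
      have hy := SimpleGraph.dist_eq_one_iff_adj.2 hxy
      have hz := SimpleGraph.dist_eq_one_iff_adj.2 hxz
      rw [hchild x y (by simp [hy]), hchild x z (by simp [hz]), hl1 y hxy, hl1 z hxz]
      refine ⟨fun h => ?_, fun h => absurd h hv⟩
      by_cases hyw : y = w
      · have : z = w := by simpa [hyw] using h
        exact absurd (hyw.trans this.symm) hyz
      · have hzw : z ≠ w := by simpa [hyw] using h
        exact ⟨y, z, w, hyz, hyw, hzw, hxy, hxz, hvw⟩
    · rcases hG.dist_eq_dist_add_one_of_adj v hxy with h | h <;>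
        rcases hG.dist_eq_dist_add_one_of_adj v hxz with h' | h'
      · exact absurd (parent_unique hG hxy hxz h h') hyz
      · exact hmix x y z hx hxz h h'
      · rw [eq_comm]
        exact hmix x z y hx hxy h' h
      · have hr : IsRamification G x := by
          refine ⟨par x, y, z, ?_, ?_, hyz, (hpar x hx).1, hxy, hxz⟩
          · intro e
            have := (hpar x hx).2
            rw [e] at this
            omega
          · intro e
            have := (hpar x hx).2
            rw [e] at this
            omega
        rw [hchild x y h, hchild x z h', hl2 x y hx hxy h, hl2 x z hx hxz h']
        simp [hr]

/-- An automorphism shifts the colors of all edges in the same way. -/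
theorem edgeShift_eq {G : SimpleGraph V} (hG : G.IsTree) {c : V → V → Bool}
    (hc : ∀ x y, G.Adj x y → c x y = c y x)
    (hc' : ∀ x y z, G.Adj x y → G.Adj x z → y ≠ z → (c x y = c x z ↔ IsRamification G x))
    {g : Equiv.Perm V} (hg : IsAut G g) {x y a b : V} (hxy : G.Adj x y) (hab : G.Adj a b) :
    (c (g x) (g y) = c x y ↔ c (g a) (g b) = c a b) := by
  have key : ∀ x y z, G.Adj x y → G.Adj x z →
      (c (g x) (g y) = c x y ↔ c (g x) (g z) = c x z) := by
    intro x y z hxy hxz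
    by_cases hyz : y = z
    · rw [hyz]
    · have h1 := hc' x y z hxy hxz hyz
      have h2 := hc' (g x) (g y) (g z) ((hg _ _).2 hxy) ((hg _ _).2 hxz) (by simpa using hyz)
      rw [isRamification_map_iff hg, ← h1] at h2
      revert h2
      generalize c (g x) (g y) = p
      generalize c (g x) (g z) = q
      generalize c x y = r
      generalize c x z = s
      revert p q r s
      decide
  obtain ⟨p⟩ := hG.connected x a
  induction p generalizing y with
  | nil => exact key _ _ _ hxy hab
  | @cons u v w huv p ih =>
    rw [key u y v hxy huv, hc u v huv, hc (g u) (g v) ((hg _ _).2 huv)]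
    exact ih huv.symm hab

theorem mem_autf_of_mem_autfPlus {G : SimpleGraph V} {f : V → I} {α : Equiv.Perm V}
    (hα : α ∈ autfPlus G f) : α ∈ autf G f :=
  (Subgroup.closure_le (autf G f)).2 (fun _ h => h.1) hα

/-- Edge stabilizers keep the color of one edge, hence of all edges, and they generate
`Aut_f⁺`. -/
theorem edgeColor_preserved {G : SimpleGraph V} (hG : G.IsTree) {f : V → I} {c : V → V → Bool}
    (hc : ∀ x y, G.Adj x y → c x y = c y x)
    (hc' : ∀ x y z, G.Adj x y → G.Adj x z → y ≠ z → (c x y = c x z ↔ IsRamification G x))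
    {α : Equiv.Perm V} (hα : α ∈ autfPlus G f) {x y : V} (hxy : G.Adj x y) :
    c (α x) (α y) = c x y := by
  induction hα using Subgroup.closure_induction generalizing x y with
  | mem g hg =>
    obtain ⟨hg, a, b, hab, ha, hb⟩ := hg
    rw [edgeShift_eq hG hc hc' hg.1 hxy hab, ha, hb]
  | one => rfl
  | mul g h _ hh ihg ihh =>
    have hh' := (mem_autf_of_mem_autfPlus hh).1
    exact (ihg ((hh' x y).2 hxy)).trans (ihh hxy)
  | inv g hg ih =>
    have hg' := isAut_inv (mem_autf_of_mem_autfPlus hg).1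
    have := ih ((hg' x y).2 hxy)
    simpa using this.symm

/-- A vertex fixed by an element of `Aut_f⁺` that moves a neighbor is a ramification point. -/
theorem isRamification_of_swap {G : SimpleGraph V} (hG : G.IsTree) {f : V → I}
    {α : Equiv.Perm V} (hα : α ∈ autfPlus G f) {v w : V} (hvw : G.Adj v w) (hv : α v = v)
    (hw : α w ≠ w) : IsRamification G v := by
  by_contra hr
  obtain ⟨c, hc, hc'⟩ := exists_edgeColoring hG hvw hr
  have h1 := edgeColor_preserved hG hc hc' hα hvw
  have h2 := ((mem_autf_of_mem_autfPlus hα).1 v w).2 hvw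
  rw [hv] at h1 h2
  exact hr ((hc' v (α w) w h2 hvw hw).1 h1)

/-! ### Exchanging two branches -/

/-- The vertices on the side of `w` of an edge `{v, w}`: those closer to `w` than to `v`. -/
def branch (G : SimpleGraph V) (v w : V) : Set V := {x | G.dist w x < G.dist v x}

theorem branch_dist {G : SimpleGraph V} (hG : G.IsTree) {v w x : V} (hvw : G.Adj v w)
    (hx : x ∈ branch G v w) : G.dist v x = G.dist w x + 1 := by
  have h := hG.dist_eq_dist_add_one_of_adj x hvw
  simp only [branch, Set.mem_ofPred_eq] at hx
  rw [SimpleGraph.dist_comm (u := x), SimpleGraph.dist_comm (u := x)] at h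
  omega

/-- The only edge leaving the branch at `w` is `{v, w}` itself. -/
theorem branch_boundary {G : SimpleGraph V} (hG : G.IsTree) {v w x y : V} (hvw : G.Adj v w)
    (hxy : G.Adj x y) (hx : x ∈ branch G v w) (hy : y ∉ branch G v w) : x = w ∧ y = v := by
  have hdx := branch_dist hG hvw hx
  have hdy := hG.dist_eq_dist_add_one_of_adj y hvw
  rw [SimpleGraph.dist_comm (u := y), SimpleGraph.dist_comm (u := y)] at hdy
  simp only [branch, Set.mem_ofPred_eq, not_lt] at hy
  have h1 := hG.dist_eq_dist_add_one_of_adj v hxy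
  have h2 := hG.dist_eq_dist_add_one_of_adj w hxy
  have hxw : x = w := by
    by_contra hne
    -- The neighbors of `x` towards `w` and `y` are both parents of `x` with respect to `v`.
    obtain ⟨p, hp, hdp⟩ := exists_parent hG w x hne
    have h3 := hG.dist_eq_dist_add_one_of_adj v hp
    have h4 := hG.dist_eq_dist_add_one_of_adj p hvw
    rw [SimpleGraph.dist_comm (u := p), SimpleGraph.dist_comm (u := p)] at h4
    have hpy : p = y := parent_unique (v := v) hG hp hxy (by omega) (by omega)
    subst hpy
    omega
  refine ⟨hxw, ?_⟩
  subst hxw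
  rw [SimpleGraph.dist_self] at hdx h2
  have : G.dist v y = 0 := by omega
  exact (hG.connected.dist_eq_zero_iff.1 this).symm

theorem branch_disjoint {G : SimpleGraph V} (hG : G.IsTree) {v w w' x : V} (hw : G.Adj v w)
    (hw' : G.Adj v w') (hne : w ≠ w') (hx : x ∈ branch G v w) : x ∉ branch G v w' := by
  intro hx'
  have h1 := branch_dist hG hw hx
  have h2 := branch_dist hG hw' hx'
  rw [SimpleGraph.dist_comm, SimpleGraph.dist_comm (v := x)] at h1 h2
  exact hne (parent_unique hG hw hw' h1 h2)

theorem branch_map {G : SimpleGraph V} (hG : G.IsTree) {α : Equiv.Perm V} (h : IsAut G α)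
    {v w x : V} (hv : α v = v) : α x ∈ branch G v (α w) ↔ x ∈ branch G v w := by
  simp only [branch, Set.mem_ofPred_eq]
  have hvx := dist_map hG h v x
  rw [hv] at hvx
  rw [dist_map hG h, hvx]

open Classical in
/-- The map exchanging the branches through `w` and `α w` by `α` and `α⁻¹`, and fixing
everything else. -/
noncomputable def swapFun (G : SimpleGraph V) (α : Equiv.Perm V) (v w : V) (x : V) : V :=
  if x ∈ branch G v w then α x else if x ∈ branch G v (α w) then α⁻¹ x else x

/-- Exchanging two branches along `α` is a color-preserving automorphism: colors are only compared
vertex by vertex, and the edges leaving the branches all end at the fixed vertex `v`. -/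
theorem exists_branchSwap {G : SimpleGraph V} (hG : G.IsTree) {f : V → I} {α : Equiv.Perm V}
    (hα : α ∈ autf G f) {v w : V} (hvw : G.Adj v w) (hv : α v = v) (hw : α w ≠ w) :
    ∃ σ ∈ autf G f, σ v = v ∧ σ w = α w ∧
      ∀ u, G.Adj v u → u ≠ w → u ≠ α w → σ u = u := by
  have hvw' : G.Adj v (α w) := by
    have := (hα.1 v w).2 hvw
    rwa [hv] at this
  have s1 : ∀ x, x ∈ branch G v w → swapFun G α v w x = α x := fun x hx => if_pos hx
  have s2 : ∀ x, x ∈ branch G v (α w) → swapFun G α v w x = α⁻¹ x := fun x hx => by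
    rw [swapFun, if_neg (branch_disjoint hG hvw' hvw hw hx), if_pos hx]
  have s3 : ∀ x, x ∉ branch G v w → x ∉ branch G v (α w) → swapFun G α v w x = x :=
    fun x hx hx' => by rw [swapFun, if_neg hx, if_neg hx']
  have m1 : ∀ x, x ∈ branch G v w → α x ∈ branch G v (α w) :=
    fun x hx => (branch_map hG hα.1 hv).2 hx
  have m2 : ∀ x, x ∈ branch G v (α w) → α⁻¹ x ∈ branch G v w :=
    fun x hx => (branch_map hG hα.1 hv).1 (by simpa using hx)
  have inv : Function.Involutive (swapFun G α v w) := by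
    intro x
    by_cases h1 : x ∈ branch G v w
    · rw [s1 x h1, s2 _ (m1 x h1)]
      simp
    · by_cases h2 : x ∈ branch G v (α w)
      · rw [s2 x h2, s1 _ (m2 x h2)]
        simp
      · rw [s3 x h1 h2, s3 x h1 h2]
  have self_mem : ∀ u, G.Adj v u → u ∈ branch G v u := by
    intro u hu
    simp only [branch, Set.mem_ofPred_eq, SimpleGraph.dist_self,
      SimpleGraph.dist_eq_one_iff_adj.2 hu, zero_lt_one]
  have sv : swapFun G α v w v = v := s3 v (by simp [branch]) (by simp [branch])
  have sw : swapFun G α v w w = α w := s1 w (self_mem w hvw)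
  have sw' : swapFun G α v w (α w) = w := by
    rw [s2 _ (self_mem _ hvw')]
    simp
  -- An edge leaving one of the two branches ends at `v`, so its image is an edge as well.
  have leave1 : ∀ x y, G.Adj x y → x ∈ branch G v w → y ∉ branch G v w →
      G.Adj (swapFun G α v w x) (swapFun G α v w y) := by
    intro x y hxy hx hy
    obtain ⟨rfl, rfl⟩ := branch_boundary hG hvw hxy hx hy
    rw [sw, sv]
    exact hvw'.symm
  have leave2 : ∀ x y, G.Adj x y → x ∈ branch G v (α w) → y ∉ branch G v (α w) →
      G.Adj (swapFun G α v w x) (swapFun G α v w y) := by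
    intro x y hxy hx hy
    obtain ⟨hx', rfl⟩ := branch_boundary hG hvw' hxy hx hy
    rw [hx', sw', sv]
    exact hvw.symm
  have adj : ∀ x y, G.Adj x y → G.Adj (swapFun G α v w x) (swapFun G α v w y) := by
    intro x y hxy
    by_cases hx : x ∈ branch G v w
    · by_cases hy : y ∈ branch G v w
      · rw [s1 x hx, s1 y hy]
        exact (hα.1 x y).2 hxy
      · exact leave1 x y hxy hx hy
    · by_cases hy : y ∈ branch G v w
      · exact (leave1 y x hxy.symm hy hx).symm
      · by_cases hx' : x ∈ branch G v (α w)
        · by_cases hy' : y ∈ branch G v (α w)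
          · rw [s2 x hx', s2 y hy']
            exact (isAut_inv hα.1 x y).2 hxy
          · exact leave2 x y hxy hx' hy'
        · by_cases hy' : y ∈ branch G v (α w)
          · exact (leave2 y x hxy.symm hy' hx').symm
          · rwa [s3 x hx hx', s3 y hy hy']
  refine ⟨inv.toPerm, ⟨fun x y => ⟨fun h => ?_, adj x y⟩, fun x => ?_⟩, sv, sw, ?_⟩
  · have := adj _ _ h
    simpa [inv x, inv y] using this
  · change f (swapFun G α v w x) = f x
    by_cases h1 : x ∈ branch G v w
    · rw [s1 x h1, hα.2]
    · by_cases h2 : x ∈ branch G v (α w)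
      · rw [s2 x h2]
        exact ((autf G f).inv_mem hα).2 x
      · rw [s3 x h1 h2]
  · intro u hu h1 h2
    exact s3 u (branch_disjoint hG hu hvw h1 (self_mem u hu))
      (branch_disjoint hG hu hvw' h2 (self_mem u hu))

/-! ### Rotations in `Aut_f⁺(A)` -/

/-- every nontrivial rotation in `Aut_f⁺(A)` fixes a ramification
point and is a composition of two pointwise edge stabilizers of `Aut_f(A)`. -/
theorem rotation_fixes_ramification (G : SimpleGraph V) (hG : G.IsTree)
    (f : V → I) (hnt : autfPlus G f ≠ ⊥)
    (α : Equiv.Perm V) (hα : α ∈ autfPlus G f) (hα1 : α ≠ 1)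
    (hrot : IsRotation α) :
    (∃ r, α r = r ∧ IsRamification G r) ∧
    ∃ σ₁ σ₂ : Equiv.Perm V, σ₁ ∈ edgeStabilizers G (autf G f) ∧
      σ₂ ∈ edgeStabilizers G (autf G f) ∧ α = σ₁ * σ₂ := by
  have hαf := mem_autf_of_mem_autfPlus hα
  by_cases he : ∃ a b, G.Adj a b ∧ α a = a ∧ α b = b
  · obtain ⟨a, b, hab, ha, hb⟩ := he
    exact ⟨exists_ramification_of_fixed_edge hG hαf.1 hα1 hab ha hb,
      α, 1, ⟨hαf, a, b, hab, ha, hb⟩, ⟨one_mem _, a, b, hab, rfl, rfl⟩, (mul_one α).symm⟩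
  · obtain ⟨v, hv⟩ := hrot
    obtain ⟨w, hvw⟩ : ∃ w, G.Adj v w := by
      obtain ⟨z, hz⟩ : ∃ z, z ≠ v := by
        by_contra hall
        push Not at hall
        apply hα1
        ext z
        rw [hall z, hv]
        rfl
      obtain ⟨w, hw, -⟩ := exists_parent hG z v hz.symm
      exact ⟨w, hw⟩
    have hw : α w ≠ w := fun hw => he ⟨v, w, hvw, hv, hw⟩
    have hr := isRamification_of_swap hG hα hvw hv hw
    refine ⟨⟨v, hv, hr⟩, ?_⟩
    obtain ⟨u, hu, huw, huw'⟩ : ∃ u, G.Adj v u ∧ u ≠ w ∧ u ≠ α w := by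
      obtain ⟨a, b, c, hab, hac, hbc, ha, hb, hc⟩ := hr
      by_contra hno
      push Not at hno
      by_cases haw : a = w
      · have hb' := hno b hb fun h => hab (haw.trans h.symm)
        have hc' := hno c hc fun h => hac (haw.trans h.symm)
        exact hbc (hb'.trans hc'.symm)
      · have ha' := hno a ha haw
        by_cases hbw : b = w
        · exact hac (ha'.trans (hno c hc fun h => hbc (hbw.trans h.symm)).symm)
        · exact hab (ha'.trans (hno b hb hbw).symm)
    obtain ⟨σ, hσ, hσv, hσw, hσu⟩ := exists_branchSwap hG hαf hvw hv hw
    have hvw' : G.Adj v (α w) := by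
      have := (hαf.1 v w).2 hvw
      rwa [hv] at this
    refine ⟨α * σ⁻¹, σ, ⟨mul_mem hαf (inv_mem hσ), v, α w, hvw', ?_, ?_⟩,
      ⟨hσ, v, u, hu, hσv, hσu u hu huw huw'⟩, by simp⟩
    · rw [Equiv.Perm.mul_apply, Equiv.Perm.inv_eq_iff_eq.2 hσv.symm, hv]
    · rw [Equiv.Perm.mul_apply, Equiv.Perm.inv_eq_iff_eq.2 hσw.symm]

end BSTrees
end

section
/- For all cardinals n, m ≥ 3, if A is an (n,m)-biregular tree, then Aut⁺(A) is 32-boundedly simple: for all nontrivial g, h ∈ Aut⁺(A), h is a product of at most 32 conjugates (in Aut⁺(A)) of g or of g⁻¹. -/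
/-!
The group `Aut⁺` of a biregular tree turns out to be the group of all color-preserving
automorphisms (`BiTree.autPlus_eq`). Bounded simplicity is proved with half-trees, the two pieces
left when an edge is removed.

*Decomposition* (`BiTree.decomp`). Every color-preserving automorphism `h` is a product of four
automorphisms, each supported on a half-tree. A first one moves a vertex `v` to `h v`, a second one
then corrects the image of a neighbor of `v`, and an automorphism fixing an edge splits into its
restrictions to the two sides of that edge. The automorphisms needed exist because any
color-compatible bijection between the stars of two vertices extends to the whole tree
(`BiTree.exists_ext`).

*Wandering half-trees* (`BiTree.exists_wandering`). Let `g ≠ 1`. Since every vertex has at least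
three neighbors, some half-tree `S` satisfies `g S ∩ S = ∅`. There is a color-preserving `d` mapping
the complement of `S` properly into `S`, and then `t = d g d⁻¹ g` maps `S` into the complement of
`d S`, a proper part of `S`. A half-tree `T` in the rest of `S` satisfies `tᵏ T ∩ T = ∅` for all
`k ≥ 1`. Color-preserving automorphisms act transitively on half-trees of each of the two types, so
every half-tree wanders in this way under a conjugate of some such `t`.

*Commutators* (`BiTree.eq_commutator`). If `T` wanders under `t` and `y` is supported on `T`, then
`x = ∏ tᵏ y t⁻ᵏ` over `k ≥ 0` is a well-defined automorphism with `y = (x t x⁻¹) t⁻¹`. Hence `y` is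
a product of two conjugates of `t` or `t⁻¹`, that is, of four conjugates of `g` or `g⁻¹`.

Altogether `h` is a product of 16 conjugates of `g` or `g⁻¹`, well within the bound 32.
-/

open Pointwise

namespace BSTrees

universe u

variable {V : Type u} {I : Type*}

/-! ### Half-trees -/

/-- The properties of a biregular tree with proper 2-coloring `c` on which the argument rests:
vertices of the same color have equinumerous neighbor sets, and every vertex has at least three
neighbors (phrased as: a neighbor different from any two given vertices). -/
structure BiTree (G : SimpleGraph V) (c : V → Bool) : Prop where
  tree : G.IsTree
  col : ∀ x y, G.Adj x y → c x ≠ c y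
  equi : ∀ x y, c x = c y → Nonempty (G.neighborSet x ≃ G.neighborSet y)
  third : ∀ v a b, ∃ u, G.Adj v u ∧ u ≠ a ∧ u ≠ b

/-- For adjacent `x`, `y` in a tree: the half-tree hanging off the edge `xy` on the side of `y`. -/
def Half (G : SimpleGraph V) (x y : V) : Set V := {z | G.dist z y < G.dist z x}

/-- The automorphisms preserving the coloring `c` and supported on the half-tree `Half G p q`. -/
def HalfFix (G : SimpleGraph V) (c : V → Bool) (p q : V) : Subgroup (Equiv.Perm V) where
  carrier := {y | y ∈ autf G c ∧ ∀ z, z ∉ Half G p q → y z = z}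
  one_mem' := ⟨one_mem _, fun _ _ => rfl⟩
  mul_mem' := fun {a b} ha hb => ⟨mul_mem ha.1 hb.1, fun z hz => by
    rw [Equiv.Perm.mul_apply, hb.2 z hz, ha.2 z hz]⟩
  inv_mem' := fun {a} ha => ⟨inv_mem ha.1, fun z hz => by
    rw [Equiv.Perm.inv_eq_iff_eq, ha.2 z hz]⟩

theorem dist_aut {G : SimpleGraph V} {π : Equiv.Perm V} (hπ : IsAut G π) (x y : V) :
    G.dist (π x) (π y) = G.dist x y := by
  have key : ∀ {S : Set ℕ} {T : Set ℕ}, S = T → sInf S = sInf T := fun h => h ▸ rfl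
  let e : G ≃g G := ⟨π, fun {a b} => hπ a b⟩
  rw [SimpleGraph.dist_eq_sInf, SimpleGraph.dist_eq_sInf]
  apply key
  ext k
  constructor
  · rintro ⟨p, rfl⟩
    refine ⟨(p.map e.symm.toHom).copy (e.symm_apply_apply x) (e.symm_apply_apply y), ?_⟩
    simp
  · rintro ⟨p, rfl⟩
    exact ⟨p.map e.toHom, SimpleGraph.Walk.length_map _ _⟩

theorem mem_half_aut {G : SimpleGraph V} {π : Equiv.Perm V} (hπ : IsAut G π) {x y z : V} :
    π z ∈ Half G (π x) (π y) ↔ z ∈ Half G x y := by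
  simp only [Half, Set.mem_ofPred_eq, dist_aut hπ]

theorem right_mem_half {G : SimpleGraph V} {x y : V} (h : G.Adj x y) : y ∈ Half G x y := by
  simp [Half, SimpleGraph.dist_eq_one_iff_adj.2 h.symm]

theorem left_not_mem_half (G : SimpleGraph V) (x y : V) : x ∉ Half G x y := by
  simp [Half]

namespace BiTree

variable {G : SimpleGraph V} {c : V → Bool}

theorem even_dist (H : BiTree G c) (x y : V) : Even (G.dist x y) ↔ c x = c y := by
  obtain ⟨p, hp⟩ := H.tree.connected.exists_walk_length_eq_dist x y
  let C : G.Coloring Bool := SimpleGraph.Coloring.mk c (fun {a b} h => H.col a b h)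
  rw [← hp, C.even_length_iff_congr p]
  exact Bool.eq_iff_iff.symm

theorem dist_adj_ne (H : BiTree G c) {x y : V} (h : G.Adj x y) (z : V) :
    G.dist z x ≠ G.dist z y := by
  intro e
  have h1 := H.even_dist z x
  have h2 := H.even_dist z y
  have h3 := H.col x y h
  rw [e, h2] at h1
  revert h1 h3
  cases c x <;> cases c y <;> cases c z <;> simp

theorem dist_adj (H : BiTree G c) {x y : V} (h : G.Adj x y) (z : V) :
    G.dist z x = G.dist z y + 1 ∨ G.dist z y = G.dist z x + 1 := by
  have h1 := H.dist_adj_ne h z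
  have h2 : G.dist z x ≤ G.dist z y + G.dist y x := H.tree.connected.dist_triangle
  have h3 : G.dist z y ≤ G.dist z x + G.dist x y := H.tree.connected.dist_triangle
  rw [SimpleGraph.dist_eq_one_iff_adj.2 h] at h3
  rw [SimpleGraph.dist_eq_one_iff_adj.2 h.symm] at h2
  omega

/-- In a tree only one neighbor of `z` is closer to `x` than `z` is. -/
theorem unique_pred (H : BiTree G c) {x z a b : V} (ha : G.Adj z a) (hb : G.Adj z b)
    (ha' : G.dist x a < G.dist x z) (hb' : G.dist x b < G.dist x z) : a = b := by
  have key : ∀ a, G.Adj z a → G.dist x a < G.dist x z →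
      ∃ p : G.Path z x, (p : G.Walk z x).snd = a := by
    intro a ha ha'
    obtain ⟨p, hp⟩ := H.tree.connected.exists_walk_length_eq_dist a x
    have h1 := H.dist_adj ha x
    have : (SimpleGraph.Walk.cons ha p).length = G.dist z x := by
      rw [SimpleGraph.Walk.length_cons, hp, SimpleGraph.dist_comm, SimpleGraph.dist_comm (u := z)]
      omega
    exact ⟨⟨_, SimpleGraph.Walk.isPath_of_length_eq_dist _ this⟩, by simp⟩
  obtain ⟨p, hp⟩ := key a ha ha'
  obtain ⟨q, hq⟩ := key b hb hb'
  have := H.tree.isAcyclic.subsingleton_path z x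
  rw [← hp, ← hq, Subsingleton.elim p q]

theorem exists_pred (H : BiTree G c) {x z : V} (h : z ≠ x) :
    ∃ a, G.Adj z a ∧ G.dist x z = G.dist x a + 1 := by
  obtain ⟨p, hp⟩ := H.tree.connected.exists_walk_length_eq_dist z x
  cases p with
  | nil => exact absurd rfl h
  | @cons _ a _ hza q =>
    refine ⟨a, hza, ?_⟩
    have h1 := SimpleGraph.dist_le q
    rw [SimpleGraph.Walk.length_cons, SimpleGraph.dist_comm] at hp
    rw [SimpleGraph.dist_comm] at h1
    have := H.dist_adj hza x
    omega

theorem not_mem_half (H : BiTree G c) {x y z : V} (h : G.Adj x y) :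
    z ∉ Half G x y ↔ z ∈ Half G y x := by
  have := H.dist_adj_ne h z
  simp only [Half, Set.mem_ofPred_eq]
  omega

/-- The only edge leaving the half-tree `Half G x y` is `yx`. -/
theorem half_boundary (H : BiTree G c) {x y z z' : V} (h : G.Adj x y) (hz : z ∈ Half G x y)
    (hz' : z' ∉ Half G x y)
    (hzz : G.Adj z z') : z = y ∧ z' = x := by
  rw [H.not_mem_half h] at hz'
  simp only [Half, Set.mem_ofPred_eq] at hz hz'
  have a1 := H.dist_adj h z
  have a2 := H.dist_adj h z'
  have a3 := H.dist_adj hzz x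
  have a4 := H.dist_adj hzz y
  simp only [SimpleGraph.dist_comm (v := z), SimpleGraph.dist_comm (v := z')] at a3 a4
  have hzy : z = y := by
    by_contra hne
    obtain ⟨a, ha, ha'⟩ := H.exists_pred hne
    have a5 := H.dist_adj h a
    simp only [SimpleGraph.dist_comm (u := y)] at ha'
    have : a = z' := by
      refine H.unique_pred (x := x) ha hzz ?_ ?_ <;>
      simp only [SimpleGraph.dist_comm (u := x)] <;> omega
    subst this
    omega
  refine ⟨hzy, ?_⟩
  subst hzy
  rw [SimpleGraph.dist_self] at *
  have : G.dist z' x = 0 := by omega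
  exact H.tree.connected.dist_eq_zero_iff.1 this

theorem half_unique (H : BiTree G c) {x a b z : V} (ha : G.Adj x a) (hb : G.Adj x b)
    (hza : z ∈ Half G x a)
    (hzb : z ∈ Half G x b) : a = b :=
  H.unique_pred ha hb hza hzb

theorem half_subset (H : BiTree G c) {v u b z : V} (hv : G.Adj v u) (hb : G.Adj u b) (hne : b ≠ v)
    (hz : z ∈ Half G u b) : z ∈ Half G v u := by
  by_contra h
  rw [H.not_mem_half hv] at h
  exact hne (H.half_unique hb hv.symm hz h)

/-- A geodesic leaving a half-tree passes through the boundary vertex. -/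
theorem dist_cross (H : BiTree G c) {v u z w : V} (h : G.Adj v u) (hz : z ∈ Half G v u)
    (hw : w ∉ Half G v u) :
    G.dist z w = G.dist z v + G.dist v w := by
  apply le_antisymm H.tree.connected.dist_triangle
  obtain ⟨p, hp⟩ := H.tree.connected.exists_walk_length_eq_dist z w
  rw [← hp]
  clear hp
  induction p with
  | nil => exact absurd hz hw
  | @cons z z1 w hzz q ih =>
    rw [SimpleGraph.Walk.length_cons]
    by_cases h1 : z1 ∈ Half G v u
    · have := ih h1 hw
      have := H.dist_adj hzz v
      simp only [SimpleGraph.dist_comm (u := v) (v := z),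
        SimpleGraph.dist_comm (u := v) (v := z1)] at this
      omega
    · obtain ⟨rfl, rfl⟩ := H.half_boundary h hz h1 hzz
      have := SimpleGraph.dist_le q
      rw [SimpleGraph.dist_eq_one_iff_adj.2 hzz]
      omega

theorem half_disjoint (H : BiTree G c) {v u w t z : V} (hu : G.Adj v u) (ht : G.Adj w t)
    (hvw : v ≠ w)
    (h1 : w ∉ Half G v u) (h2 : v ∉ Half G w t) (hz : z ∈ Half G v u) : z ∉ Half G w t := by
  intro hz'
  have a := H.dist_cross hu hz h1
  have b := H.dist_cross ht hz' h2
  have d : G.dist v w ≠ 0 := fun e => hvw (H.tree.connected.dist_eq_zero_iff.1 e)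
  omega

theorem fix_right (H : BiTree G c) {p q : V} {y : Equiv.Perm V} (h : G.Adj p q)
    (hy : y ∈ HalfFix G c p q) :
    y p = p ∧ y q = q := by
  have hp : y p = p := hy.2 p (left_not_mem_half G p q)
  refine ⟨hp, ?_⟩
  have hq : y q ∈ Half G p q := by
    by_contra hn
    have := y.injective (hy.2 _ hn)
    rw [this] at hn
    exact hn (right_mem_half h)
  have hadj : G.Adj (y q) p := by
    have := (hy.1.1 q p).2 h.symm
    rwa [hp] at this
  exact (H.half_boundary h hq (left_not_mem_half G p q) hadj).1

end BiTree

/-! ### Extending automorphisms from a star -/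

namespace BiTree

variable {G : SimpleGraph V} {c : V → Bool}

/-- The neighbor of `z` closest to `m`, with junk value `m` at `z = m`. -/
noncomputable def par (H : BiTree G c) (m z : V) : V :=
  open Classical in if h : z ≠ m then (H.exists_pred h).choose else m

theorem par_spec (H : BiTree G c) {m z : V} (h : z ≠ m) :
    G.Adj z (H.par m z) ∧ G.dist m z = G.dist m (H.par m z) + 1 := by
  rw [par, dif_pos h]
  exact (H.exists_pred h).choose_spec

theorem par_eq (H : BiTree G c) {m z a : V} (h : G.Adj z a) (hd : G.dist m a < G.dist m z) :
    z ≠ m ∧ H.par m z = a := by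
  have hne : z ≠ m := by
    rintro rfl
    simp at hd
  obtain ⟨h1, h2⟩ := H.par_spec hne
  exact ⟨hne, H.unique_pred (x := m) h1 h (by omega) hd⟩

theorem adj_par (H : BiTree G c) (m : V) {z z' : V} (h : G.Adj z z') :
    (z ≠ m ∧ H.par m z = z') ∨ (z' ≠ m ∧ H.par m z' = z) := by
  rcases H.dist_adj h m with h1 | h1
  · exact Or.inl (H.par_eq h (by omega))
  · exact Or.inr (H.par_eq h.symm (by omega))

/-- Neighborhoods of vertices of the same color can be matched with one prescribed value. -/
theorem exists_bijOn (H : BiTree G c) {x y a b : V} (hc : c x = c y) (ha : G.Adj x a)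
    (hb : G.Adj y b) :
    ∃ f : V → V, Set.BijOn f (G.neighborSet x) (G.neighborSet y) ∧ f a = b := by
  classical
  obtain ⟨E0⟩ := H.equi x y hc
  let E := E0.trans (Equiv.swap (E0 ⟨a, ha⟩) ⟨b, hb⟩)
  have hE : E ⟨a, ha⟩ = ⟨b, hb⟩ := by simp [E]
  let f : V → V := fun z => if h : z ∈ G.neighborSet x then (E ⟨z, h⟩ : V) else z
  have hf : ∀ z (h : z ∈ G.neighborSet x), f z = E ⟨z, h⟩ := fun z h => dif_pos h
  refine ⟨f, ⟨?_, ?_, ?_⟩, ?_⟩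
  · intro z hz
    rw [hf z hz]
    exact (E ⟨z, hz⟩).2
  · intro z hz w hw hzw
    rw [hf z hz, hf w hw] at hzw
    simpa using E.injective (Subtype.ext hzw)
  · intro w hw
    refine ⟨E.symm ⟨w, hw⟩, (E.symm ⟨w, hw⟩).2, ?_⟩
    rw [hf _ (E.symm ⟨w, hw⟩).2]
    simp
  · rw [hf a ha, hE]

/-- A choice of bijections between neighborhoods, from which an automorphism sending `m` to `m'`
is assembled: at `m` the prescribed `e₀`, elsewhere a bijection respecting parents, and the
identity from a neighborhood to itself when `m = m'`. -/
theorem exists_local (H : BiTree G c) {m m' : V} (e₀ : V → V)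
    (he₀ : Set.BijOn e₀ (G.neighborSet m) (G.neighborSet m')) :
    ∃ e : V → V → V → V, ∀ x y, c x = c y → (x = m ↔ y = m') →
      Set.BijOn (e x y) (G.neighborSet x) (G.neighborSet y) ∧ (x = m → e x y = e₀) ∧
      (x ≠ m → e x y (H.par m x) = H.par m' y) ∧
      (m = m' → x = y → x ≠ m → ∀ z, e x y z = z) := by
  have key : ∀ x y, ∃ f : V → V, c x = c y → (x = m ↔ y = m') →
      Set.BijOn f (G.neighborSet x) (G.neighborSet y) ∧ (x = m → f = e₀) ∧
      (x ≠ m → f (H.par m x) = H.par m' y) ∧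
      (m = m' → x = y → x ≠ m → ∀ z, f z = z) := by
    intro x y
    by_cases hx : x = m
    · refine ⟨e₀, fun _ h => ?_⟩
      have hy := h.1 hx
      subst hx hy
      exact ⟨he₀, fun _ => rfl, fun h => absurd rfl h, fun _ _ h => absurd rfl h⟩
    by_cases hm : m = m' ∧ x = y
    · obtain ⟨rfl, rfl⟩ := hm
      exact ⟨id, fun _ _ => ⟨Set.bijOn_id _, fun h => absurd h hx, fun _ => rfl,
        fun _ _ _ _ => rfl⟩⟩
    by_cases h : c x = c y ∧ (x = m ↔ y = m')
    · have hy : y ≠ m' := fun e => hx (h.2.2 e)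
      obtain ⟨f, hf, hf'⟩ := H.exists_bijOn h.1 (H.par_spec hx).1 (H.par_spec hy).1
      exact ⟨f, fun _ _ => ⟨hf, fun e => absurd e hx, fun _ => hf', fun e e' => absurd ⟨e, e'⟩ hm⟩⟩
    · exact ⟨id, fun h1 h2 => absurd ⟨h1, h2⟩ h⟩
  choose e he using key
  exact ⟨e, he⟩

/-- Every color-compatible bijection between the stars of `m` and `m'` extends to a
color-preserving automorphism. If `m = m'`, the extension fixes pointwise every half-tree at `m`
whose first edge is fixed. -/
theorem exists_ext (H : BiTree G c) {m m' : V} (hm : c m = c m') (e₀ : V → V)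
    (he₀ : Set.BijOn e₀ (G.neighborSet m) (G.neighborSet m')) :
    ∃ φ ∈ autf G c, φ m = m' ∧ (∀ a, G.Adj m a → φ a = e₀ a) ∧
      (m = m' → ∀ a, G.Adj m a → e₀ a = a → ∀ z ∈ Half G m a, φ z = z) := by
  obtain ⟨e, he⟩ := H.exists_local e₀ he₀
  -- `F k` computes the image of vertices at distance `k` from `m`
  let F : ℕ → V → V := fun k => Nat.rec (fun _ => m')
    (fun _ f z => e (H.par m z) (f (H.par m z)) z) k
  let Φ : V → V := fun z => F (G.dist m z) z
  have Φm : Φ m = m' := by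
    change F (G.dist m m) m = m'
    rw [SimpleGraph.dist_self]
    rfl
  have Φs : ∀ z, z ≠ m → Φ z = e (H.par m z) (Φ (H.par m z)) z := by
    intro z hz
    change F (G.dist m z) z = _
    rw [(H.par_spec hz).2]
  -- color and distance to the root are preserved
  have inv : ∀ k z, G.dist m z = k → G.dist m' (Φ z) = k ∧ c (Φ z) = c z ∧
      (z ≠ m → G.Adj (Φ z) (Φ (H.par m z))) := by
    intro k
    induction k with
    | zero =>
      intro z hz
      obtain rfl := H.tree.connected.dist_eq_zero_iff.1 hz
      rw [Φm]
      exact ⟨SimpleGraph.dist_self, hm.symm, fun h => absurd rfl h⟩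
    | succ k ih =>
      intro z hz
      have hne : z ≠ m := by
        rintro rfl
        simp at hz
      obtain ⟨ha, hd⟩ := H.par_spec hne
      obtain ⟨i1, i2, -⟩ := ih (H.par m z) (by omega)
      have hiff : H.par m z = m ↔ Φ (H.par m z) = m' := by
        rw [← H.tree.connected.dist_eq_zero_iff (u := Φ _), eq_comm (a := H.par m z),
          ← H.tree.connected.dist_eq_zero_iff, SimpleGraph.dist_comm (u := Φ _)]
        omega
      obtain ⟨e1, e2, e3, -⟩ := he _ _ i2.symm hiff
      have hadj : G.Adj (Φ (H.par m z)) (Φ z) := by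
        rw [Φs z hne]
        exact e1.mapsTo ha.symm
      refine ⟨?_, ?_, fun _ => hadj.symm⟩
      · rcases H.dist_adj hadj m' with h | h
        · exfalso
          have hp : H.par m z ≠ m := by
            intro hp
            have := hiff.1 hp
            rw [this] at h
            simp at h
          obtain ⟨-, h2⟩ := H.par_eq hadj (by omega : G.dist m' (Φ z) < _)
          rw [← e3 hp, Φs z hne] at h2
          have := e1.injOn (H.par_spec hp).1 ha.symm h2
          have h3 := (H.par_spec hp).2
          rw [this] at h3
          omega
        · omega
      · have h1 := H.col _ _ hadj
        have h2 := H.col _ _ ha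
        revert h1 h2
        rw [i2]
        cases c z <;> cases c (Φ z) <;> cases c (H.par m z) <;> simp
  have Φd : ∀ z, G.dist m' (Φ z) = G.dist m z := fun z => (inv _ z rfl).1
  have Φc : ∀ z, c (Φ z) = c z := fun z => (inv _ z rfl).2.1
  have Φiff : ∀ z, z = m ↔ Φ z = m' := by
    intro z
    rw [eq_comm, eq_comm (b := m'), ← H.tree.connected.dist_eq_zero_iff,
      ← H.tree.connected.dist_eq_zero_iff, Φd]
  have Φa : ∀ z, z ≠ m → G.Adj (Φ z) (Φ (H.par m z)) := fun z => (inv _ z rfl).2.2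
  have Φp : ∀ z, z ≠ m → H.par m' (Φ z) = Φ (H.par m z) := by
    intro z hz
    have := (H.par_spec hz).2
    exact (H.par_eq (Φa z hz) (by rw [Φd, Φd]; omega)).2
  have hinj : ∀ k z w, G.dist m z = k → Φ z = Φ w → z = w := by
    intro k
    induction k with
    | zero =>
      intro z w hz hzw
      obtain rfl := H.tree.connected.dist_eq_zero_iff.1 hz
      rw [Φm] at hzw
      exact ((Φiff w).2 hzw.symm).symm
    | succ k ih =>
      intro z w hz hzw
      have hz0 : z ≠ m := by
        rintro rfl
        simp at hz
      have hw0 : w ≠ m := fun h => hz0 ((Φiff z).2 (hzw.trans ((Φiff w).1 h)))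
      have hp : H.par m z = H.par m w := by
        refine ih _ _ ?_ ?_
        · have := (H.par_spec hz0).2
          omega
        · rw [← Φp z hz0, ← Φp w hw0, hzw]
      rw [Φs z hz0, Φs w hw0, ← hp] at hzw
      refine (he _ _ (Φc _).symm (Φiff _)).1.injOn (H.par_spec hz0).1.symm ?_ hzw
      rw [hp]
      exact (H.par_spec hw0).1.symm
  have hsurj : ∀ k w, G.dist m' w = k → ∃ z, Φ z = w := by
    intro k
    induction k with
    | zero =>
      intro w hw
      obtain rfl := H.tree.connected.dist_eq_zero_iff.1 hw
      exact ⟨m, Φm⟩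
    | succ k ih =>
      intro w hw
      have hw0 : w ≠ m' := by
        rintro rfl
        simp at hw
      obtain ⟨ha, hd⟩ := H.par_spec hw0
      obtain ⟨p, hp⟩ := ih _ (by omega : G.dist m' (H.par m' w) = k)
      obtain ⟨e1, -, e3, -⟩ := he p (Φ p) (Φc _).symm (Φiff _)
      obtain ⟨z, hz, hzw⟩ := e1.surjOn (show w ∈ G.neighborSet (Φ p) by rw [hp]; exact ha.symm)
      rcases H.adj_par m hz with ⟨h1, h2⟩ | ⟨h1, h2⟩
      · exfalso
        rw [← h2, e3 h1] at hzw
        have hp0 : Φ p ≠ m' := fun h => h1 ((Φiff p).2 h)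
        have := (H.par_spec hp0).2
        rw [hzw, hp] at this
        omega
      · refine ⟨z, ?_⟩
        rw [Φs z h1, h2, hzw]
  have hbij : Function.Bijective Φ :=
    ⟨fun z w h => hinj _ z w rfl h, fun w => hsurj _ w rfl⟩
  refine ⟨Equiv.ofBijective Φ hbij, ⟨?_, Φc⟩, Φm, ?_, ?_⟩
  · intro x y
    simp only [Equiv.ofBijective_apply]
    constructor
    · intro h
      have aux : ∀ a b, Φ a ≠ m' → H.par m' (Φ a) = Φ b → G.Adj a b := by
        intro a b h1 h2
        have ha : a ≠ m := fun e => h1 ((Φiff a).1 e)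
        rw [Φp a ha] at h2
        rw [← hbij.1 h2]
        exact (H.par_spec ha).1
      rcases H.adj_par m' h with ⟨h1, h2⟩ | ⟨h1, h2⟩
      · exact aux _ _ h1 h2
      · exact (aux _ _ h1 h2).symm
    · intro h
      rcases H.adj_par m h with ⟨h1, h2⟩ | ⟨h1, h2⟩
      · rw [← h2]
        exact Φa x h1
      · rw [← h2]
        exact (Φa y h1).symm
  · intro a ha
    have h0 : G.dist m m < G.dist m a := by
      rw [SimpleGraph.dist_self, SimpleGraph.dist_eq_one_iff_adj.2 ha]
      exact one_pos
    obtain ⟨h1, h2⟩ := H.par_eq ha.symm h0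
    simp only [Equiv.ofBijective_apply]
    rw [Φs a h1, h2, Φm, (he m m' hm (by simp)).2.1 rfl]
  · intro hmm a ha ha0
    have key : ∀ k z, G.dist m z = k → z ∈ Half G m a → Φ z = z := by
      intro k
      induction k with
      | zero =>
        intro z hz
        obtain rfl := H.tree.connected.dist_eq_zero_iff.1 hz
        intro h
        exact absurd h (left_not_mem_half G _ _)
      | succ k ih =>
        intro z hz hza
        have hz0 : z ≠ m := by
          rintro rfl
          simp at hz
        obtain ⟨h1, h2⟩ := H.par_spec hz0
        rw [Φs z hz0]
        by_cases hp : H.par m z ∈ Half G m a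
        · rw [ih _ (by omega) hp]
          refine (he _ _ rfl (by rw [hmm])).2.2.2 hmm rfl ?_ z
          intro h
          rw [h] at hp
          exact left_not_mem_half G _ _ hp
        · obtain ⟨rfl, h4⟩ := H.half_boundary ha hza hp h1
          rw [h4, Φm, (he m m' hm (by simp)).2.1 rfl, ha0]
    exact fun z hz => key _ z rfl hz

end BiTree

/-! ### Gluing along disjoint half-trees -/

namespace BiTree

variable {G : SimpleGraph V} {c : V → Bool}

/-- Automorphisms fixing the boundary edges of pairwise disjoint half-trees can be glued, with the
identity outside these half-trees. -/
theorem exists_glue (H : BiTree G c) {ι : Type*} (p q : ι → V) (hpq : ∀ k, G.Adj (p k) (q k))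
    (hdis : ∀ j k z, z ∈ Half G (p j) (q j) → z ∈ Half G (p k) (q k) → j = k)
    (f : ι → Equiv.Perm V) (hf : ∀ k, f k ∈ autf G c)
    (hp : ∀ k, f k (p k) = p k) (hq : ∀ k, f k (q k) = q k) :
    ∃ x ∈ autf G c, (∀ k, ∀ z ∈ Half G (p k) (q k), x z = f k z) ∧
      ∀ z, (∀ k, z ∉ Half G (p k) (q k)) → x z = z := by
  classical
  let A : (ι → Equiv.Perm V) → V → V := fun f z =>
    if h : ∃ k, z ∈ Half G (p k) (q k) then f h.choose z else z
  have A1 : ∀ f k z, z ∈ Half G (p k) (q k) → A f z = f k z := by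
    intro f k z hz
    have h : ∃ k, z ∈ Half G (p k) (q k) := ⟨k, hz⟩
    have : A f z = f h.choose z := dif_pos h
    rw [this, hdis _ _ z h.choose_spec hz]
  have A2 : ∀ f z, (∀ k, z ∉ Half G (p k) (q k)) → A f z = z := by
    intro f z hz
    exact dif_neg (fun ⟨k, hk⟩ => hz k hk)
  let P : (ι → Equiv.Perm V) → Prop := fun f =>
    ∀ k, f k ∈ autf G c ∧ f k (p k) = p k ∧ f k (q k) = q k
  have hP : P f := fun k => ⟨hf k, hp k, hq k⟩
  have hP' : P (fun k => (f k)⁻¹) := fun k => ⟨inv_mem (hf k),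
    Equiv.Perm.inv_eq_iff_eq.2 (hp k).symm, Equiv.Perm.inv_eq_iff_eq.2 (hq k).symm⟩
  have pres : ∀ f, P f → ∀ k z, z ∈ Half G (p k) (q k) → f k z ∈ Half G (p k) (q k) := by
    intro f hf k z hz
    have := (mem_half_aut (hf k).1.1 (x := p k) (y := q k)).2 hz
    rwa [(hf k).2.1, (hf k).2.2] at this
  have canc : ∀ f g : ι → Equiv.Perm V, P f → (∀ k z, g k (f k z) = z) → ∀ z, A g (A f z) = z := by
    intro f g hf hg z
    by_cases h : ∃ k, z ∈ Half G (p k) (q k)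
    · obtain ⟨k, hk⟩ := h
      rw [A1 f k z hk, A1 g k _ (pres f hf k z hk), hg]
    · push Not at h
      rw [A2 f z h, A2 g z h]
  have bd : ∀ f, P f → ∀ k z w, G.Adj z w → z ∈ Half G (p k) (q k) →
      w ∉ Half G (p k) (q k) → A f z = z := by
    intro f hf k z w hzw hz hw
    obtain ⟨rfl, rfl⟩ := H.half_boundary (hpq k) hz hw hzw
    rw [A1 f k _ hz, (hf k).2.2]
  -- an endpoint of an edge that is not inside a single half-tree is fixed
  have fixd : ∀ f, P f → ∀ z w, G.Adj z w →
      (¬ ∃ k, z ∈ Half G (p k) (q k) ∧ w ∈ Half G (p k) (q k)) → A f z = z := by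
    intro f hf z w hzw hn
    by_cases h : ∃ k, z ∈ Half G (p k) (q k)
    · obtain ⟨k, hk⟩ := h
      exact bd f hf k z w hzw hk (fun hw => hn ⟨k, hk, hw⟩)
    · push Not at h
      exact A2 f z h
  have adj : ∀ f, P f → ∀ z w, G.Adj z w → G.Adj (A f z) (A f w) := by
    intro f hf z w hzw
    by_cases h : ∃ k, z ∈ Half G (p k) (q k) ∧ w ∈ Half G (p k) (q k)
    · obtain ⟨k, hz, hw⟩ := h
      rw [A1 f k z hz, A1 f k w hw]
      exact ((hf k).1.1 z w).2 hzw
    · rw [fixd f hf z w hzw h, fixd f hf w z hzw.symm (by simpa only [and_comm] using h)]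
      exact hzw
  have c1 := canc f (fun k => (f k)⁻¹) hP (by simp)
  have c2 := canc (fun k => (f k)⁻¹) f hP' (by simp)
  refine ⟨⟨A f, A (fun k => (f k)⁻¹), c1, c2⟩, ⟨?_, ?_⟩, fun k z hz => A1 f k z hz,
    fun z hz => A2 f z hz⟩
  · intro z w
    refine ⟨fun h => ?_, adj f hP z w⟩
    have := adj _ hP' _ _ h
    simpa only [Equiv.coe_fn_mk, c1] using this
  · intro z
    change c (A f z) = c z
    by_cases h : ∃ k, z ∈ Half G (p k) (q k)
    · obtain ⟨k, hk⟩ := h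
      rw [A1 f k z hk, (hf k).2]
    · push Not at h
      rw [A2 f z h]

/-! ### Every color-preserving automorphism is a product of four supported on half-trees -/

/-- An automorphism fixing `m`, sending the neighbor `a` to the neighbor `b`, and supported on the
two half-trees at `m` through `a` and `b`. -/
theorem exists_swap (H : BiTree G c) {m a b : V} (ha : G.Adj m a) (hb : G.Adj m b) :
    ∃ σ ∈ autf G c, σ m = m ∧ σ a = b ∧
      ∀ z, z ∉ Half G m a → z ∉ Half G m b → σ z = z := by
  classical
  have hb0 : Set.BijOn (Equiv.swap a b) (G.neighborSet m) (G.neighborSet m) := by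
    have key : ∀ z, G.Adj m z → G.Adj m (Equiv.swap a b z) := by
      intro z hz
      rw [Equiv.swap_apply_def]
      split_ifs
      · exact hb
      · exact ha
      · exact hz
    refine ⟨fun z hz => key z hz, (Equiv.injective _).injOn, fun z hz => ?_⟩
    exact ⟨Equiv.swap a b z, key z hz, by simp⟩
  obtain ⟨σ, h1, h2, h3, h4⟩ := H.exists_ext rfl _ hb0
  refine ⟨σ, h1, h2, by rw [h3 a ha]; simp, fun z hza hzb => ?_⟩
  by_cases hz : z = m
  · rw [hz, h2]
  -- the half-tree at `m` containing `z` starts at some `d` different from `a` and `b`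
  obtain ⟨d, hd, hd'⟩ := H.exists_pred (Ne.symm hz)
  have hzd : z ∈ Half G m d := by
    simp only [Half, Set.mem_ofPred_eq]
    omega
  refine h4 rfl d hd (Equiv.swap_apply_of_ne_of_ne ?_ ?_) z hzd
  · rintro rfl
    exact hza hzd
  · rintro rfl
    exact hzb hzd

/-- Automorphisms supported on a half-tree act transitively on its spheres around the root. -/
theorem sphere_trans (H : BiTree G c) {u m : V} (hum : G.Adj u m) (k : ℕ) :
    ∀ v w, v ∈ Half G u m → w ∈ Half G u m → G.dist m v = k → G.dist m w = k →
      ∃ f ∈ HalfFix G c u m, f v = w := by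
  induction k with
  | zero =>
    intro v w _ _ hv hw
    obtain rfl := H.tree.connected.dist_eq_zero_iff.1 hv
    obtain rfl := H.tree.connected.dist_eq_zero_iff.1 hw
    exact ⟨1, one_mem _, rfl⟩
  | succ k ih =>
    intro v w hv hw hvk hwk
    have aux : ∀ x, x ∈ Half G u m → G.dist m x = k + 1 →
        ∃ x', G.Adj x x' ∧ x' ∈ Half G u m ∧ G.dist m x' = k := by
      intro x hx hxk
      have hne : x ≠ m := by
        rintro rfl
        simp at hxk
      obtain ⟨x', h1, h2⟩ := H.exists_pred hne
      refine ⟨x', h1, ?_, by omega⟩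
      by_contra h3
      exact hne (H.half_boundary hum hx h3 h1).1
    obtain ⟨v', hvv, hv', hvk'⟩ := aux v hv hvk
    obtain ⟨w', hww, hw', hwk'⟩ := aux w hw hwk
    obtain ⟨f, hf, hfv⟩ := ih v' w' hv' hw' hvk' hwk'
    obtain ⟨hfu, hfm⟩ := H.fix_right hum hf
    have hfv1 : f v ∈ Half G u m := by
      have := (mem_half_aut hf.1.1 (x := u) (y := m)).2 hv
      rwa [hfu, hfm] at this
    have hfvk : G.dist m (f v) = k + 1 := by
      have := dist_aut hf.1.1 m v
      rw [hfm] at this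
      omega
    have hadj : G.Adj w' (f v) := by
      have := (hf.1.1 v' v).2 hvv.symm
      rwa [hfv] at this
    obtain ⟨σ, hσ, -, hσ2, hσ3⟩ := H.exists_swap hadj hww.symm
    refine ⟨σ * f, mul_mem ⟨hσ, fun z hz => ?_⟩ hf, by simpa using hσ2⟩
    -- paths from `z` to `w'`, `w` and `f v` all pass through `m`
    have far : ∀ x, x ∈ Half G u m → G.dist m x = k + 1 → z ∉ Half G w' x := by
      intro x hx hxk
      have hz' := (H.not_mem_half hum).1 hz
      have d1 := H.dist_cross hum.symm hz' ((H.not_mem_half hum.symm).2 hx)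
      have d2 := H.dist_cross hum.symm hz' ((H.not_mem_half hum.symm).2 hw')
      simp only [Half, Set.mem_ofPred_eq]
      omega
    exact hσ3 z (far _ hfv1 hfvk) (far _ hw hwk)

/-- Two vertices `v`, `w` of the same color lie on a common sphere around their midpoint, and inside
the half-tree seen through the midpoint from a neighbor pointing to neither of them. -/
theorem exists_move (H : BiTree G c) {v w : V} (hc : c v = c w) :
    ∃ p q, G.Adj p q ∧ ∃ f ∈ HalfFix G c p q, f v = w := by
  by_cases hvw : v = w
  · obtain ⟨u, hu, -⟩ := H.third v v v
    exact ⟨v, u, hu, 1, one_mem _, hvw⟩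
  obtain ⟨k, hk⟩ := (H.even_dist v w).2 hc
  -- the midpoint of `v` and `w`
  obtain ⟨p, hp⟩ := H.tree.connected.exists_walk_length_eq_dist v w
  have h1 := SimpleGraph.dist_le (p.take k)
  have h2 := SimpleGraph.dist_le (p.drop k)
  have h3 : G.dist v w ≤ G.dist v (p.getVert k) + G.dist (p.getVert k) w :=
    H.tree.connected.dist_triangle
  rw [SimpleGraph.Walk.take_length] at h1
  rw [SimpleGraph.Walk.drop_length] at h2
  generalize p.getVert k = m at *
  have hmv : G.dist v m = k := by omega
  have hmw : G.dist m w = k := by omega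
  have hne : G.dist v w ≠ 0 := fun e => hvw (H.tree.connected.dist_eq_zero_iff.1 e)
  obtain ⟨a, ha, hav⟩ := H.exists_pred (x := v) (z := m) (by rintro rfl; simp at hmv; omega)
  obtain ⟨b, hb, hbw⟩ := H.exists_pred (x := w) (z := m) (by rintro rfl; simp at hmw; omega)
  obtain ⟨u, hu, hua, hub⟩ := H.third m a b
  refine ⟨u, m, hu.symm, H.sphere_trans hu.symm k v w ?_ ?_ ?_ hmw⟩
  · rw [← H.not_mem_half hu]
    intro h
    refine hua (H.half_unique hu ha h ?_)
    simp only [Half, Set.mem_ofPred_eq]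
    omega
  · rw [← H.not_mem_half hu]
    intro h
    refine hub (H.half_unique hu hb h ?_)
    simp only [Half, Set.mem_ofPred_eq]
    omega
  · rw [SimpleGraph.dist_comm, hmv]

/-- The color-preserving automorphisms supported on some half-tree. -/
def HalfSupp (_ : BiTree G c) : Set (Equiv.Perm V) :=
  {y | ∃ p q, G.Adj p q ∧ y ∈ HalfFix G c p q}

/-- Correct `h` so as to fix a vertex, then an edge; an automorphism fixing an edge is the product
of its restrictions to the two half-trees of that edge. -/
theorem decomp (H : BiTree G c) {h : Equiv.Perm V} (hh : h ∈ autf G c) :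
    ∃ y₁ ∈ H.HalfSupp, ∃ y₂ ∈ H.HalfSupp, ∃ y₃ ∈ H.HalfSupp, ∃ y₄ ∈ H.HalfSupp,
      h = y₁ * y₂ * y₃ * y₄ := by
  obtain ⟨v⟩ := H.tree.connected.nonempty
  obtain ⟨a, ha, -⟩ := H.third v v v
  -- `f⁻¹ * h` fixes `v`
  obtain ⟨p, q, hpq, f, hf, hfv⟩ := H.exists_move (hh.2 v).symm
  let h1 := f⁻¹ * h
  have hh1 : h1 ∈ autf G c := mul_mem (inv_mem hf.1) hh
  have h1v : h1 v = v := by simp [h1, ← hfv]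
  have ha' : G.Adj v (h1 a) := by
    have := (hh1.1 v a).2 ha
    rwa [h1v] at this
  -- `σ⁻¹ * f⁻¹ * h` fixes `v` and `a`
  obtain ⟨u, hu, hua, hua'⟩ := H.third v a (h1 a)
  obtain ⟨σ, hσ, hσv, hσa, hσ'⟩ := H.exists_swap ha ha'
  have hσs : σ ∈ HalfFix G c u v := by
    refine ⟨hσ, fun z hz => ?_⟩
    rw [H.not_mem_half hu.symm] at hz
    exact hσ' z (fun h => hua (H.half_unique hu ha hz h))
      (fun h => hua' (H.half_unique hu ha' hz h))
  let h2 := σ⁻¹ * h1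
  have hh2 : h2 ∈ autf G c := mul_mem (inv_mem hσ) hh1
  have h2v : h2 v = v := by
    simp only [h2, Equiv.Perm.mul_apply, h1v]
    exact Equiv.Perm.inv_eq_iff_eq.2 hσv.symm
  have h2a : h2 a = a := by simp [h2, ← hσa]
  -- split into the parts on the two sides of the edge `va`
  obtain ⟨r, hr, hr1, hr2⟩ := H.exists_glue (ι := Unit) (fun _ => v) (fun _ => a) (fun _ => ha)
    (fun _ _ _ _ _ => rfl) (fun _ => h2) (fun _ => hh2) (fun _ => h2v) (fun _ => h2a)
  refine ⟨f, ⟨p, q, hpq, hf⟩, σ, ⟨u, v, hu.symm, hσs⟩, r, ⟨v, a, ha, hr, fun z hz => ?_⟩,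
    r⁻¹ * h2, ⟨a, v, ha.symm, mul_mem (inv_mem hr) hh2, fun z hz => ?_⟩, ?_⟩
  · exact hr2 z (fun _ => hz)
  · rw [H.not_mem_half ha.symm] at hz
    rw [Equiv.Perm.mul_apply, Equiv.Perm.inv_eq_iff_eq, hr1 () z hz]
  · simp [h2, h1, mul_assoc]

/-- Elements supported on a half-tree fix its boundary edge, so `decomp` puts every color-preserving
automorphism into `Aut⁺`; conversely an automorphism fixing a vertex preserves colors, which are
determined by the parity of the distance to that vertex. -/
theorem autPlus_eq (H : BiTree G c) : autPlus G = autf G c := by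
  apply le_antisymm
  · refine (Subgroup.closure_le _).2 ?_
    rintro π ⟨hπ, x, y, -, hx, -⟩
    refine ⟨hπ, fun z => ?_⟩
    have h1 := H.even_dist x (π z)
    have h2 := H.even_dist x z
    have h3 := dist_aut hπ x z
    rw [hx] at h3
    rw [h3, h2] at h1
    revert h1
    cases c x <;> cases c z <;> cases c (π z) <;> simp
  · intro h hh
    have key : ∀ y ∈ H.HalfSupp, y ∈ autPlus G := by
      rintro y ⟨p, q, hpq, hy⟩
      exact Subgroup.subset_closure ⟨hy.1.1, p, q, hpq, H.fix_right hpq hy⟩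
    obtain ⟨y₁, h₁, y₂, h₂, y₃, h₃, y₄, h₄, rfl⟩ := H.decomp hh
    exact mul_mem (mul_mem (mul_mem (key _ h₁) (key _ h₂)) (key _ h₃)) (key _ h₄)

end BiTree

/-! ### Wandering half-trees and commutators -/

namespace BiTree

variable {G : SimpleGraph V} {c : V → Bool}

/-- If the positive powers of `t` move a half-tree off itself, every `y` supported on it is a
commutator `[x, t]`: take for `x` the infinite product of the conjugates `tᵏ y t⁻ᵏ`, `k ≥ 0`. -/
theorem eq_commutator (H : BiTree G c) {p q : V} (hpq : G.Adj p q) {t y : Equiv.Perm V}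
    (ht : t ∈ autf G c) (hy : y ∈ HalfFix G c p q)
    (hw : ∀ k : ℕ, ∀ z ∈ Half G p q, (t ^ (k + 1)) z ∉ Half G p q) :
    ∃ x ∈ autf G c, y = x * t * x⁻¹ * t⁻¹ := by
  obtain ⟨hyp, hyq⟩ := H.fix_right hpq hy
  have htk : ∀ k : ℕ, t ^ k ∈ autf G c := fun k => pow_mem ht k
  have mem : ∀ (k : ℕ) z, (t ^ k) z ∈ Half G ((t ^ k) p) ((t ^ k) q) ↔ z ∈ Half G p q :=
    fun k z => mem_half_aut (htk k).1
  have lt_dis : ∀ j k z, j < k → z ∈ Half G ((t ^ j) p) ((t ^ j) q) →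
      z ∉ Half G ((t ^ k) p) ((t ^ k) q) := by
    intro j k z hjk hj hk
    obtain ⟨i, rfl⟩ := Nat.exists_eq_add_of_lt hjk
    obtain ⟨z, rfl⟩ := (t ^ (j + i + 1)).surjective z
    rw [mem] at hk
    refine hw i z hk ?_
    rwa [add_assoc, pow_add, Equiv.Perm.mul_apply, mem] at hj
  obtain ⟨x, hx, hx1, hx2⟩ := H.exists_glue (fun k : ℕ => (t ^ k) p) (fun k => (t ^ k) q)
    (fun k => ((htk k).1 p q).2 hpq)
    (by
      intro j k z hj hk
      rcases lt_trichotomy j k with h | h | h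
      · exact absurd hk (lt_dis _ _ z h hj)
      · exact h
      · exact absurd hj (lt_dis _ _ z h hk))
    (fun k => t ^ k * y * (t ^ k)⁻¹)
    (fun k => mul_mem (mul_mem (htk k) hy.1) (inv_mem (htk k)))
    (by simp [hyp]) (by simp [hyq])
  refine ⟨x, hx, ?_⟩
  have shift : ∀ k z, t z ∈ Half G ((t ^ (k + 1)) p) ((t ^ (k + 1)) q) ↔
      z ∈ Half G ((t ^ k) p) ((t ^ k) q) := by
    intro k z
    rw [pow_succ', Equiv.Perm.mul_apply, Equiv.Perm.mul_apply]
    exact mem_half_aut ht.1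
  have key : x * t = y * t * x := by
    ext z
    simp only [Equiv.Perm.mul_apply]
    by_cases h : ∃ k, z ∈ Half G ((t ^ k) p) ((t ^ k) q)
    · obtain ⟨k, hk⟩ := h
      rw [hx1 k z hk, hx1 (k + 1) (t z) ((shift k z).2 hk)]
      have e : (t ^ (k + 1) * y * (t ^ (k + 1))⁻¹) (t z) = t ((t ^ k * y * (t ^ k)⁻¹) z) := by
        simp only [← Equiv.Perm.mul_apply]
        congr 1
        group
      rw [e]
      refine (hy.2 _ fun hm => ?_).symm
      have hxz : x z ∈ Half G ((t ^ k) p) ((t ^ k) q) := by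
        rw [hx1 k z hk]
        obtain ⟨z, rfl⟩ := (t ^ k).surjective z
        simp only [Equiv.Perm.mul_apply, Equiv.Perm.inv_def, Equiv.symm_apply_apply, mem] at hk ⊢
        have := (mem_half_aut hy.1.1 (x := p) (y := q)).2 hk
        rwa [hyp, hyq] at this
      rw [← hx1 k z hk] at hm
      refine lt_dis 0 (k + 1) _ (Nat.succ_pos k) ?_ ((shift k _).2 hxz)
      simpa using hm
    · push Not at h
      rw [hx2 z h]
      by_cases h0 : t z ∈ Half G p q
      · rw [hx1 0 (t z) (by simpa using h0)]
        simp
      · rw [hy.2 _ h0]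
        refine hx2 _ fun k => ?_
        cases k with
        | zero => simpa using h0
        | succ k =>
          rw [shift]
          exact h k
  rw [key]
  group

/-- A nontrivial `g` moves some half-tree off itself. -/
theorem exists_displaced (H : BiTree G c) {g : Equiv.Perm V} (hg : g ∈ autf G c) (hg1 : g ≠ 1) :
    ∃ v u, G.Adj v u ∧ ∀ z ∈ Half G v u, g z ∉ Half G v u := by
  obtain ⟨v, hv⟩ : ∃ v, g v ≠ v := by
    by_contra h
    push Not at h
    exact hg1 (Equiv.ext h)
  obtain ⟨a, ha, hav⟩ := H.exists_pred (x := g v) (z := v) hv.symm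
  obtain ⟨b, hb, hbv⟩ := H.exists_pred (x := v) (z := g v) hv
  obtain ⟨u, hu, hua, hub⟩ := H.third v a (g⁻¹ b)
  have hgu : G.Adj (g v) (g u) := (hg.1 v u).2 hu
  refine ⟨v, u, hu, fun z hz hgz => ?_⟩
  refine H.half_disjoint hu hgu hv.symm ?_ ?_ hgz ((mem_half_aut hg.1).2 hz)
  · intro h
    refine hua (H.half_unique hu ha h ?_)
    simp only [Half, Set.mem_ofPred_eq]
    omega
  · intro h
    refine hub (Equiv.Perm.eq_inv_iff_eq.2 (H.half_unique hgu hb h ?_))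
    simp only [Half, Set.mem_ofPred_eq]
    omega

/-- If `g` is nontrivial, some product `d g d⁻¹ g` maps a half-tree properly into itself; a
half-tree in the part left uncovered is then disjoint from its images under all positive powers. -/
theorem exists_wandering (H : BiTree G c) {g : Equiv.Perm V} (hg : g ∈ autf G c) (hg1 : g ≠ 1) :
    ∃ d ∈ autf G c, ∃ u b, G.Adj u b ∧
      ∀ k : ℕ, ∀ z ∈ Half G u b, ((d * g * d⁻¹ * g) ^ (k + 1)) z ∉ Half G u b := by
  obtain ⟨v, u, hvu, hd⟩ := H.exists_displaced hg hg1
  obtain ⟨b, hb, hbv, -⟩ := H.third u v v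
  obtain ⟨b', hb', hbv', hbb⟩ := H.third u v b
  obtain ⟨d, hdm, hdu, hdv, -⟩ := H.exists_swap hvu.symm hb
  -- `d g d⁻¹ g` maps the half-tree `Half G v u` into its proper part `Half G u b`
  have step : ∀ z ∈ Half G v u, (d * g * d⁻¹ * g) z ∈ Half G u b := by
    intro z hz
    have h1 : g z ∈ Half G u v := (H.not_mem_half hvu).1 (hd z hz)
    have hdi : d⁻¹ ∈ autf G c := inv_mem hdm
    have hdu' : d⁻¹ u = u := Equiv.Perm.inv_eq_iff_eq.2 hdu.symm
    have h2 : d⁻¹ (g z) ∈ Half G u (d⁻¹ v) := by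
      have := (mem_half_aut hdi.1 (x := u) (y := v)).2 h1
      rwa [hdu'] at this
    have hadj : G.Adj u (d⁻¹ v) := by
      have := (hdi.1 u v).2 hvu.symm
      rwa [hdu'] at this
    have h3 : d⁻¹ (g z) ∈ Half G v u := by
      refine H.half_subset hvu hadj ?_ h2
      intro e
      rw [Equiv.Perm.inv_eq_iff_eq, hdv] at e
      exact hbv e.symm
    have h4 : g (d⁻¹ (g z)) ∈ Half G u v := (H.not_mem_half hvu).1 (hd _ h3)
    have := (mem_half_aut hdm.1 (x := u) (y := v)).2 h4
    rwa [hdu, hdv] at this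
  refine ⟨d, hdm, u, b', hb', fun k z hz hk => ?_⟩
  have all : ((d * g * d⁻¹ * g) ^ (k + 1)) z ∈ Half G u b := by
    clear hk
    induction k with
    | zero =>
      rw [zero_add, pow_one]
      exact step z (H.half_subset hvu hb' hbv' hz)
    | succ k ih =>
      rw [pow_succ', Equiv.Perm.mul_apply]
      exact step _ (H.half_subset hvu hb hbv ih)
  exact hbb (H.half_unique hb' hb hk all)

/-- Color-preserving automorphisms act transitively on edges oriented from a given color. -/
theorem exists_edge_map (H : BiTree G c) {u b p q : V} (hub : G.Adj u b) (hpq : G.Adj p q)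
    (hc : c u = c p) : ∃ d ∈ autf G c, d u = p ∧ d b = q := by
  obtain ⟨e, he, hb⟩ := H.exists_bijOn hc hub hpq
  obtain ⟨d, h1, h2, h3, -⟩ := H.exists_ext hc e he
  exact ⟨d, h1, h2, by rw [h3 b hub, hb]⟩

/-- For nontrivial `g`, each half-tree wanders under some conjugate of a product `d g d⁻¹ g`. -/
theorem exists_wandering_of_half (H : BiTree G c) {g : Equiv.Perm V} (hg : g ∈ autf G c)
    (hg1 : g ≠ 1) {p q : V} (hpq : G.Adj p q) :
    ∃ d ∈ autf G c, ∃ s ∈ autf G c, ∀ k : ℕ, ∀ z ∈ Half G p q,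
      ((s * (d * g * d⁻¹ * g) * s⁻¹) ^ (k + 1)) z ∉ Half G p q := by
  obtain ⟨d, hd, u, b, hub, hw⟩ := H.exists_wandering hg hg1
  -- the wandering half-tree may be shrunk to have the same type as `Half G p q`
  obtain ⟨u', b', hub', hc, hw'⟩ : ∃ u' b', G.Adj u' b' ∧ c u' = c p ∧
      ∀ k : ℕ, ∀ z ∈ Half G u' b', ((d * g * d⁻¹ * g) ^ (k + 1)) z ∉ Half G u' b' := by
    by_cases h : c u = c p
    · exact ⟨u, b, hub, h, hw⟩
    · obtain ⟨b', hb', hbu, -⟩ := H.third b u u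
      refine ⟨b, b', hb', ?_, fun k z hz hz' => ?_⟩
      · have := H.col u b hub
        revert h this
        cases c u <;> cases c b <;> cases c p <;> simp
      · exact hw k z (H.half_subset hub hb' hbu hz) (H.half_subset hub hb' hbu hz')
  obtain ⟨s, hs, rfl, rfl⟩ := H.exists_edge_map hub' hpq hc
  refine ⟨d, hd, s, hs, fun k z hz => ?_⟩
  obtain ⟨z, rfl⟩ := s.surjective z
  rw [mem_half_aut hs.1] at hz
  rw [conj_pow]
  rw [Equiv.Perm.mul_apply, Equiv.Perm.mul_apply, Equiv.Perm.inv_def s, Equiv.symm_apply_apply]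
  rw [mem_half_aut hs.1]
  exact hw' k z hz

end BiTree

/-! ### Counting conjugates -/

/-- `h` is a product of at most `N` conjugates of `g` or of `g⁻¹`. -/
def ConjProd {Γ : Type*} [Group Γ] (g : Γ) (N : ℕ) (h : Γ) : Prop :=
  ∃ l : List Γ, l.length ≤ N ∧
    (∀ x ∈ l, ∃ c : Γ, x = c * g * c⁻¹ ∨ x = c * g⁻¹ * c⁻¹) ∧ l.prod = h

namespace ConjProd

variable {Γ : Type*} [Group Γ] {g h k : Γ} {M N : ℕ}

theorem base (g c : Γ) : ConjProd g 1 (c * g * c⁻¹) :=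
  ⟨[c * g * c⁻¹], by simp, by simpa using ⟨c, Or.inl rfl⟩, by simp⟩

theorem mul (hh : ConjProd g M h) (hk : ConjProd g N k) : ConjProd g (M + N) (h * k) := by
  obtain ⟨l, h1, h2, rfl⟩ := hh
  obtain ⟨l', h1', h2', rfl⟩ := hk
  refine ⟨l ++ l', by simp; omega, fun x hx => ?_, by simp⟩
  rcases List.mem_append.1 hx with hx | hx
  · exact h2 x hx
  · exact h2' x hx

theorem conj (hh : ConjProd g N h) (d : Γ) : ConjProd g N (d * h * d⁻¹) := by
  obtain ⟨l, h1, h2, rfl⟩ := hh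
  refine ⟨l.map (MulAut.conj d), by simpa using h1, fun x hx => ?_, ?_⟩
  · obtain ⟨y, hy, rfl⟩ := List.mem_map.1 hx
    obtain ⟨e, rfl | rfl⟩ := h2 y hy
    · exact ⟨d * e, Or.inl (by simp [mul_assoc])⟩
    · exact ⟨d * e, Or.inr (by simp [mul_assoc])⟩
  · rw [← map_list_prod, MulAut.conj_apply]

theorem inv (hh : ConjProd g N h) : ConjProd g N h⁻¹ := by
  obtain ⟨l, h1, h2, rfl⟩ := hh
  refine ⟨(l.map (fun x => x⁻¹)).reverse, by simpa using h1, fun x hx => ?_,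
    (List.prod_inv_reverse l).symm⟩
  obtain ⟨y, hy, rfl⟩ := List.mem_map.1 (List.mem_reverse.1 hx)
  obtain ⟨e, rfl | rfl⟩ := h2 y hy
  · exact ⟨e, Or.inr (by simp [mul_assoc])⟩
  · exact ⟨e, Or.inl (by simp [mul_assoc])⟩

end ConjProd

/-- With `t` conjugate to `d g d⁻¹ g`, hence a product of two conjugates of `g`, the element `y` is
the product of a conjugate of `t` and `t⁻¹`. -/
theorem BiTree.conjProd_halfSupp {G : SimpleGraph V} {c : V → Bool} (H : BiTree G c)
    {g y : autf G c} (hg : g ≠ 1) (hy : (y : Equiv.Perm V) ∈ H.HalfSupp) : ConjProd g 4 y := by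
  obtain ⟨p, q, hpq, hy⟩ := hy
  obtain ⟨d, hd, s, hs, hw⟩ := H.exists_wandering_of_half g.2 (fun e => hg (Subtype.ext e)) hpq
  lift d to autf G c using hd
  lift s to autf G c using hs
  let t : autf G c := s * (d * g * d⁻¹ * g) * s⁻¹
  obtain ⟨x, hx, hxy⟩ := H.eq_commutator hpq t.2 hy hw
  lift x to autf G c using hx
  have hyt : y = x * t * x⁻¹ * t⁻¹ := Subtype.ext hxy
  have hg' : ConjProd g 1 g := by simpa using ConjProd.base g 1
  have ht : ConjProd g 2 t := ((ConjProd.base g d).mul hg').conj s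
  rw [hyt]
  exact (ht.conj x).mul ht.inv

theorem BiTree.boundedlySimple {G : SimpleGraph V} {c : V → Bool} (H : BiTree G c) :
    IsNBoundedlySimple (autf G c) 32 := by
  intro g h hg _
  obtain ⟨y₁, h₁, y₂, h₂, y₃, h₃, y₄, h₄, e⟩ := H.decomp h.2
  have mem : ∀ y ∈ H.HalfSupp, y ∈ autf G c := fun y ⟨_, _, _, hy⟩ => hy.1
  lift y₁ to autf G c using mem _ h₁
  lift y₂ to autf G c using mem _ h₂
  lift y₃ to autf G c using mem _ h₃
  lift y₄ to autf G c using mem _ h₄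
  have e' : y₁ * y₂ * y₃ * y₄ = h := Subtype.ext e.symm
  obtain ⟨l, hl, hl'⟩ := (((H.conjProd_halfSupp hg h₁).mul (H.conjProd_halfSupp hg h₂)).mul
    (H.conjProd_halfSupp hg h₃)).mul (H.conjProd_halfSupp hg h₄)
  -- four factors, each a product of four conjugates
  exact ⟨l, hl.trans (by norm_num), by rw [← e']; exact hl'⟩

theorem IsBiregular.exists_biTree {G : SimpleGraph V} (hG : G.IsTree) {n m : Cardinal.{u}}
    (hn : 3 ≤ n) (hm : 3 ≤ m) (hbi : IsBiregular G n m) : ∃ c : V → Bool, BiTree G c := by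
  obtain ⟨c, hc, h0, h1⟩ := hbi
  refine ⟨c, hG, hc, fun x y hxy => ?_, fun v a b => ?_⟩
  · rw [← Cardinal.eq]
    cases hx : c x
    · rw [h0 x hx, h0 y (hxy ▸ hx)]
    · rw [h1 x hx, h1 y (hxy ▸ hx)]
  · have h3 : 3 ≤ Cardinal.mk (G.neighborSet v) := by
      cases hv : c v
      · rwa [h0 v hv]
      · rwa [h1 v hv]
    -- `a` and `b` need not be neighbors of `v`; replace them by an arbitrary neighbor if not
    have hne : Nonempty (G.neighborSet v) := by
      rw [← Cardinal.mk_ne_zero_iff]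
      intro h
      rw [h] at h3
      norm_num at h3
    classical
    obtain ⟨w⟩ := hne
    obtain ⟨u, hu1, hu2⟩ := Cardinal.exists_ne_ne_of_three_le h3
      (if h : a ∈ G.neighborSet v then ⟨a, h⟩ else w)
      (if h : b ∈ G.neighborSet v then ⟨b, h⟩ else w)
    refine ⟨u, u.2, ?_, ?_⟩
    · rintro rfl
      exact hu1 (by rw [dif_pos u.2])
    · rintro rfl
      exact hu2 (by rw [dif_pos u.2])

/-- for an `(n,m)`-biregular tree (`n, m ≥ 3`), `Aut⁺(A)` is
32-boundedly simple. -/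
theorem autPlus_32_boundedlySimple (G : SimpleGraph V) (hG : G.IsTree)
    (n m : Cardinal.{u}) (hn : 3 ≤ n) (hm : 3 ≤ m) (hbi : IsBiregular G n m) :
    IsNBoundedlySimple ↥(autPlus G) 32 := by
  obtain ⟨c, H⟩ := hbi.exists_biTree hG hn hm
  rw [H.autPlus_eq]
  exact H.boundedlySimple

end BSTrees
end
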